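/- Assume condition (C) and let (K,c) ∈ D₁ ∪ D₂. Set ω₀ = √(−g₁(u₀) f'(u₀)) > 0. Then for every ε > 0 there exists δ > 0 such that: if q lies in the admissible interval ((u₁,u₀) when (K,c) ∈ D₁ with μ_b ≥ μ_f, and (u₀,u₂) when (K,c) ∈ D₁ with μ_b < μ_f or (K,c) ∈ D₂) with |q − u₀| < δ, and (u,w) is a nonconstant periodic solution of (TV) with parameter μ and initial condition (u(0),w(0)) = (q,0), then |μ + f'(u₀)| < ε, the minimal period Z of (u,w) satisfies |Z − 2π/ω₀| < ε, and sup_{z∈ℝ} |(u(z),w(z)) − (u₀,0)| < ε. Equivalently, as q → u₀, μ_per(K,c,q) → −f'(u₀), Z_per → 2π/ω₀, and the periodic orbit converges in Hausdorff distance to the single point {(u₀,0)}. -/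

import Mathlib

open Set Filter MeasureTheory

noncomputable section

namespace TrafficTW

/-- `f(u) = (K u - V(u) - c)/K`. -/
def fTV (V : ℝ → ℝ) (K c u : ℝ) : ℝ := (K * u - V u - c) / K

/-- `f'(u) = (K - V'(u))/K`. -/
def fdTV (V' : ℝ → ℝ) (K u : ℝ) : ℝ := (K - V' u) / K

/-- `h(u,μ) = f'(u) + μ`. -/
def hTV (V' : ℝ → ℝ) (K μ u : ℝ) : ℝ := fdTV V' K u + μ

/-- `g₁(u) = 1/(τ κ(1/u))`. -/
def g1TV (κ : ℝ → ℝ) (τ u : ℝ) : ℝ := 1 / (τ * κ (1 / u))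

/-- `g₂(u) = u/(2 τ κ(1/u))`. -/
def g2TV (κ : ℝ → ℝ) (τ u : ℝ) : ℝ := u / (2 * τ * κ (1 / u))

/-- The traveling-wave system (TV): `u' = w`, `w' = g₁ f + g₂ h w`. -/
def IsTVSol (V V' κ : ℝ → ℝ) (τ K c μ : ℝ) (u w : ℝ → ℝ) : Prop :=
  (∀ z, HasDerivAt u (w z) z) ∧
  (∀ z, HasDerivAt w
    (g1TV κ τ (u z) * fTV V K c (u z) + g2TV κ τ (u z) * hTV V' K μ (u z) * w z) z)

/-- Assumption (A1), where `V'` and `V''` are the first and second derivatives of `V`. -/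
def A1 (V V' V'' : ℝ → ℝ) (UM : ℝ) : Prop :=
  (∀ u ∈ Ici (0:ℝ), HasDerivWithinAt V (V' u) (Ici 0) u) ∧
  ContinuousOn V' (Ici 0) ∧
  (∀ u ∈ Ioi (0:ℝ), HasDerivAt V' (V'' u) u) ∧
  ContinuousOn V'' (Ioi 0) ∧
  (∀ u, 0 < u → 0 < V' u) ∧ (∃ M, ∀ u, 0 < u → V' u ≤ M) ∧
  Tendsto V' atTop (nhds 0) ∧
  0 < UM ∧ (∀ u, 0 < u → V' u ≤ V' UM) ∧
  (∀ u, 0 < u → (V'' u = 0 ↔ u = UM))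

/-- Assumption (A2). -/
def A2 (κ : ℝ → ℝ) : Prop :=
  ContDiffOn ℝ 1 κ (Ioi 0) ∧ ∀ ρ, 0 < ρ → 0 < κ ρ

/-- `c₀ = -V(0)`. -/
def c0v (V : ℝ → ℝ) : ℝ := - V 0

/-- `c_M(K) = K u_M(K) - V(u_M(K))`, where `uMx` is the function `K ↦ u_M(K)`. -/
def cMf (V : ℝ → ℝ) (uMx : ℝ → ℝ) (K : ℝ) : ℝ := K * uMx K - V (uMx K)

/-- `c_m(K) = K u_m(K) - V(u_m(K))`, where `umx` is the function `K ↦ u_m(K)`. -/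
def cmf (V : ℝ → ℝ) (umx : ℝ → ℝ) (K : ℝ) : ℝ := K * umx K - V (umx K)

/-- `c₁(K) = max (c₀, c_m(K))`. -/
def c1f (V : ℝ → ℝ) (umx : ℝ → ℝ) (K : ℝ) : ℝ := max (c0v V) (cmf V umx K)

/-- `uMx K = u_M(K)` is the unique local maximum point of `u ↦ K u - V(u)`, characterized
by `u_M(K) ∈ (0, U_M)` and `V'(u_M(K)) = K`, for `K ∈ (K₀, K_M)`. -/
def UMaxHyp (V' : ℝ → ℝ) (UM : ℝ) (uMx : ℝ → ℝ) : Prop :=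
  ∀ K, V' 0 < K → K < V' UM → uMx K ∈ Ioo 0 UM ∧ V' (uMx K) = K

/-- `umx K = u_m(K)` is the unique local minimum point of `u ↦ K u - V(u)`, characterized
by `u_m(K) ∈ (U_M, ∞)` and `V'(u_m(K)) = K`, for `K ∈ (0, K_M)`. -/
def UMinHyp (V' : ℝ → ℝ) (UM : ℝ) (umx : ℝ → ℝ) : Prop :=
  ∀ K, 0 < K → K < V' UM → UM < umx K ∧ V' (umx K) = K

/-- Characterization of `K₁ ∈ (K₀, K_M)`: `c_m(K) < c₀` for `K < K₁` and `c_m(K) > c₀`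
for `K > K₁`. -/
def K1Hyp (V V' : ℝ → ℝ) (UM : ℝ) (umx : ℝ → ℝ) (K₁ : ℝ) : Prop :=
  V' 0 < K₁ ∧ K₁ < V' UM ∧
  (∀ K, 0 < K → K < K₁ → cmf V umx K < c0v V) ∧
  cmf V umx K₁ = c0v V ∧
  (∀ K, K₁ < K → K < V' UM → c0v V < cmf V umx K)

/-- The parameter region `D₁`. -/
def D1 (V V' : ℝ → ℝ) (UM : ℝ) (uMx umx : ℝ → ℝ) : Set (ℝ × ℝ) :=
  {p | V' 0 < p.1 ∧ p.1 < V' UM ∧ c1f V umx p.1 < p.2 ∧ p.2 < cMf V uMx p.1}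

/-- The parameter region `D₂`. -/
def D2 (V V' : ℝ → ℝ) (umx : ℝ → ℝ) (K₁ : ℝ) : Set (ℝ × ℝ) :=
  {p | (V' 0 < p.1 ∧ p.1 < K₁ ∧ p.2 = c0v V) ∨
       (0 < p.1 ∧ p.1 < K₁ ∧ cmf V umx p.1 < p.2 ∧ p.2 < c0v V)}

/-- For `(K,c) ∈ D₁`: `u₁ < u₀ < u₂` are the exactly three positive zeros of `f`. -/
def ZerosD1 (V : ℝ → ℝ) (K c u1 u0 u2 : ℝ) : Prop :=
  0 < u1 ∧ u1 < u0 ∧ u0 < u2 ∧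
  fTV V K c u1 = 0 ∧ fTV V K c u0 = 0 ∧ fTV V K c u2 = 0 ∧
  ∀ u, 0 < u → fTV V K c u = 0 → u = u1 ∨ u = u0 ∨ u = u2

/-- For `(K,c) ∈ D₂`: `u₀ < u₂` are the exactly two positive zeros of `f`. -/
def ZerosD2 (V : ℝ → ℝ) (K c u0 u2 : ℝ) : Prop :=
  0 < u0 ∧ u0 < u2 ∧ fTV V K c u0 = 0 ∧ fTV V K c u2 = 0 ∧
  ∀ u, 0 < u → fTV V K c u = 0 → u = u0 ∨ u = u2

/-- Condition (HE1). -/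
def HE1 (u1 u2 : ℝ) (u w : ℝ → ℝ) : Prop :=
  Tendsto u atBot (nhds u1) ∧ Tendsto u atTop (nhds u2) ∧
  Tendsto w atBot (nhds 0) ∧ Tendsto w atTop (nhds 0) ∧ ∀ z, 0 < w z

/-- Condition (HE2). -/
def HE2 (u1 u2 : ℝ) (u w : ℝ → ℝ) : Prop :=
  Tendsto u atBot (nhds u2) ∧ Tendsto u atTop (nhds u1) ∧
  Tendsto w atBot (nhds 0) ∧ Tendsto w atTop (nhds 0) ∧ ∀ z, w z < 0

/-- Condition (HO) with level `ub`. -/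
def HO (ub : ℝ) (u w : ℝ → ℝ) : Prop :=
  Tendsto u atBot (nhds ub) ∧ Tendsto u atTop (nhds ub) ∧
  Tendsto w atBot (nhds 0) ∧ Tendsto w atTop (nhds 0) ∧
  ¬ (∀ z, u z = ub ∧ w z = 0)

/-- (TV) with parameter `μ` has a positive solution satisfying (HE1). -/
def HasHE1 (V V' κ : ℝ → ℝ) (τ K c μ u1 u2 : ℝ) : Prop :=
  ∃ u w : ℝ → ℝ, IsTVSol V V' κ τ K c μ u w ∧ (∀ z, 0 < u z) ∧ HE1 u1 u2 u w

/-- (TV) with parameter `μ` has a positive solution satisfying (HE2). -/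
def HasHE2 (V V' κ : ℝ → ℝ) (τ K c μ u1 u2 : ℝ) : Prop :=
  ∃ u w : ℝ → ℝ, IsTVSol V V' κ τ K c μ u w ∧ (∀ z, 0 < u z) ∧ HE2 u1 u2 u w

/-- (TV) with parameter `μ` has a positive solution satisfying (HO) with level `ub`. -/
def HasHO (V V' κ : ℝ → ℝ) (τ K c μ ub : ℝ) : Prop :=
  ∃ u w : ℝ → ℝ, IsTVSol V V' κ τ K c μ u w ∧ (∀ z, 0 < u z) ∧ HO ub u w

/-- Condition (H): `∫₁^∞ dρ/(ρ³ κ(ρ)) = ∞`. -/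
def CondH (κ : ℝ → ℝ) : Prop :=
  ¬ IntegrableOn (fun ρ => 1 / (ρ ^ 3 * κ ρ)) (Ioi 1)

/-- Condition (C). -/
def CondC (V' κ : ℝ → ℝ) (UM K₁ K : ℝ) : Prop :=
  (K₁ < K ∧ K < V' UM) ∨ (CondH κ ∧ V' 0 < K ∧ K ≤ K₁)

/-- Periodic solution. -/
def IsPeriodicSol (u w : ℝ → ℝ) : Prop :=
  ∃ Z, 0 < Z ∧ ∀ z, u (z + Z) = u z ∧ w (z + Z) = w z

/-- Nonconstant pair of functions. -/
def Nonconst (u w : ℝ → ℝ) : Prop := ∃ z, u z ≠ u 0 ∨ w z ≠ w 0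

/-- Discriminant of the Jacobian at an equilibrium `(u,0)`. -/
def discTV (V' κ : ℝ → ℝ) (τ K u μ : ℝ) : ℝ :=
  (g2TV κ τ u) ^ 2 * (hTV V' K μ u) ^ 2 + 4 * g1TV κ τ u * fdTV V' K u

/-- The eigenvalue `λ₊(u)`. -/
def lamP (V' κ : ℝ → ℝ) (τ K u μ : ℝ) : ℝ :=
  (g2TV κ τ u * hTV V' K μ u + Real.sqrt (discTV V' κ τ K u μ)) / 2

/-- The eigenvalue `λ₋(u)`. -/
def lamM (V' κ : ℝ → ℝ) (τ K u μ : ℝ) : ℝ :=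
  (g2TV κ τ u * hTV V' K μ u - Real.sqrt (discTV V' κ τ K u μ)) / 2

/-- `Z` is the minimal period of `(u,w)`. -/
def IsMinPeriod (u w : ℝ → ℝ) (Z : ℝ) : Prop :=
  0 < Z ∧ (∀ z, u (z + Z) = u z ∧ w (z + Z) = w z) ∧
  ∀ Z', 0 < Z' → (∀ z, u (z + Z') = u z ∧ w (z + Z') = w z) → Z ≤ Z'


lemma bootstrap (φ : ℝ → ℝ) (hφ : Continuous φ) (M T : ℝ) (h0 : φ 0 < M)
    (h : ∀ t ∈ Icc (0:ℝ) T, (∀ s ∈ Icc 0 t, φ s ≤ M) → φ t < M) :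
    ∀ t ∈ Icc (0:ℝ) T, φ t < M := by
  by_contra hc
  push Not at hc
  obtain ⟨t, ht, htM⟩ := hc
  have hcomp : IsCompact (Icc (0:ℝ) T ∩ {x | M ≤ φ x}) :=
    isCompact_Icc.inter_right (isClosed_le continuous_const hφ)
  obtain ⟨t1, ⟨ht1, ht1M⟩, hleast⟩ := hcomp.exists_isLeast ⟨t, ht, htM⟩
  simp only [mem_ofPred_eq] at ht1M
  obtain ⟨s, hs, hsM⟩ := intermediate_value_Icc ht1.1 hφ.continuousOn ⟨h0.le, ht1M⟩
  have hst : t1 ≤ s := hleast ⟨⟨hs.1, hs.2.trans ht1.2⟩, hsM.ge⟩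
  have hst' : s = t1 := le_antisymm hs.2 hst
  subst hst'
  have := h s ht1 (fun x hx => by
    rcases hx.2.eq_or_lt with rfl | hlt
    · exact hsM.le
    · by_contra hcc
      push Not at hcc
      exact absurd (hleast ⟨⟨hx.1, hx.2.trans ht1.2⟩, hcc.le⟩) (not_le.2 hlt))
  linarith

lemma pos_right (w : ℝ → ℝ) (s d : ℝ) (hw : HasDerivAt w d s) (hs : w s = 0) (hd : 0 < d) :
    ∃ ρ > 0, ∀ t ∈ Ioo s (s + ρ), 0 < w t := by
  have h1 := (hasDerivAt_iff_tendsto_slope.1 hw).eventually (lt_mem_nhds hd)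
  rw [eventually_nhdsWithin_iff, Metric.eventually_nhds_iff] at h1
  obtain ⟨ρ, hρ, h⟩ := h1
  refine ⟨ρ, hρ, fun t ht => ?_⟩
  have h2 := h (y := t) (by rw [Real.dist_eq, abs_lt]; constructor <;> linarith [ht.1, ht.2])
    (by simpa using ht.1.ne')
  rw [slope_def_field, hs, sub_zero] at h2
  have : 0 < t - s := by linarith [ht.1]
  exact (div_pos_iff_of_pos_right this).1 h2

lemma first_zero (w : ℝ → ℝ) (hc : Continuous w) (s e d : ℝ) (hw : HasDerivAt w d s)
    (hs : w s = 0) (hd : 0 < d) (hse : s < e) (he : w e = 0) :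
    ∃ t1, s < t1 ∧ w t1 = 0 ∧ ∀ t ∈ Ioo s t1, 0 < w t := by
  obtain ⟨ρ, hρ, hpos⟩ := pos_right w s d hw hs hd
  set m := s + ρ / 2 with hm
  have hme : m ≤ e := by
    by_contra hcc
    push Not at hcc
    have := hpos e ⟨hse, by linarith⟩
    linarith
  have hwm : 0 < w m := hpos m ⟨by linarith, by linarith⟩
  have hcomp : IsCompact (Icc m e ∩ {x | w x ≤ 0}) :=
    isCompact_Icc.inter_right (isClosed_le hc continuous_const)
  obtain ⟨t1, ⟨ht1, ht1M⟩, hleast⟩ := hcomp.exists_isLeast ⟨e, ⟨hme, le_rfl⟩, he.le⟩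
  simp only [mem_ofPred_eq] at ht1M
  obtain ⟨x, hx, hx0⟩ := intermediate_value_Icc' ht1.1 hc.continuousOn ⟨ht1M, hwm.le⟩
  have hxt : t1 ≤ x := hleast ⟨⟨hx.1, hx.2.trans ht1.2⟩, hx0.le⟩
  have hxt' : x = t1 := le_antisymm hx.2 hxt
  subst hxt'
  refine ⟨x, by linarith [hx.1], hx0, fun t ht => ?_⟩
  by_contra hcc
  push Not at hcc
  by_cases htm : t < m
  · have := hpos t ⟨ht.1, by linarith⟩
    linarith
  · push Not at htm
    exact absurd (hleast ⟨⟨htm, ht.2.le.trans ht1.2⟩, hcc⟩) (not_le.2 ht.2)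

lemma damp (u w Φ G e : ℝ → ℝ) (u0 r Z : ℝ)
    (hu : ∀ t, HasDerivAt u (w t) t) (hw : ∀ t, HasDerivAt w (Φ (u t) + e t * w t) t)
    (hG : ∀ x, |x - u0| ≤ r → HasDerivAt G (Φ x) x)
    (he : ∀ t, |u t - u0| ≤ r → e t < 0)
    (h0 : |u 0 - u0| < r) (hw0 : w 0 = 0)
    (hG1 : G (u0 + r) < G (u 0)) (hG2 : G (u0 - r) < G (u 0))
    (hZ : 0 < Z) (hper : ∀ z, u (z + Z) = u z ∧ w (z + Z) = w z) :
    ∀ z, u z = u 0 ∧ w z = 0 := by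
  have hcu : Continuous u := continuous_iff_continuousAt.2 fun t => (hu t).continuousAt
  have hcw : Continuous w := continuous_iff_continuousAt.2 fun t => (hw t).continuousAt
  set H : ℝ → ℝ := fun t => w t ^ 2 / 2 - G (u t) with hH
  have hHd : ∀ t, |u t - u0| ≤ r → HasDerivAt H (e t * w t ^ 2) t := by
    intro t ht
    have h1 := (((hw t).pow 2).div_const 2).sub ((hG (u t) ht).comp t (hu t))
    refine h1.congr_deriv ?_
    norm_num
    ring
  have hanti : ∀ T, (∀ s ∈ Icc 0 T, |u s - u0| ≤ r) → AntitoneOn H (Icc 0 T) := by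
    intro T hT
    apply antitoneOn_of_deriv_nonpos (convex_Icc 0 T)
    · intro x hx
      exact (hHd x (hT x hx)).continuousAt.continuousWithinAt
    · intro x hx
      rw [interior_Icc] at hx
      exact (hHd x (hT x (Ioo_subset_Icc_self hx))).differentiableAt.differentiableWithinAt
    · intro x hx
      rw [interior_Icc] at hx
      have hx' := hT x (Ioo_subset_Icc_self hx)
      rw [(hHd x hx').deriv]
      exact mul_nonpos_of_nonpos_of_nonneg (he x hx').le (sq_nonneg _)
  have hstay : ∀ t ∈ Icc (0:ℝ) Z, |u t - u0| < r := by
    apply bootstrap (fun t => |u t - u0|) (by fun_prop) r Z h0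
    intro t ht hs
    have h1 := hanti t hs (left_mem_Icc.2 ht.1) (right_mem_Icc.2 ht.1) ht.1
    simp only [hH, hw0] at h1
    have h2 : G (u 0) ≤ G (u t) := by nlinarith [sq_nonneg (w t)]
    refine lt_of_le_of_ne (hs t (right_mem_Icc.2 ht.1)) fun heq => ?_
    have hr : 0 ≤ r := (abs_nonneg _).trans h0.le
    rcases (abs_eq hr).1 heq with h3 | h3
    · rw [show u t = u0 + r by linarith] at h2; linarith
    · rw [show u t = u0 - r by linarith] at h2; linarith
  have hA := hanti Z (fun s hs => (hstay s hs).le)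
  have hHZ : H Z = H 0 := by
    have := hper 0
    rw [zero_add] at this
    simp only [hH, this.1, this.2]
  have hconst : ∀ t ∈ Icc 0 Z, H t = H 0 := by
    intro t ht
    have h1 := hA (left_mem_Icc.2 hZ.le) ht ht.1
    have h2 := hA ht (right_mem_Icc.2 hZ.le) ht.2
    linarith
  have hwz : ∀ t ∈ Ioo 0 Z, w t = 0 := by
    intro t ht
    have hb := (hstay t (Ioo_subset_Icc_self ht)).le
    have h1 := hHd t hb
    have h2 : HasDerivAt H 0 t := by
      apply (hasDerivAt_const t (H 0)).congr_of_eventuallyEq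
      filter_upwards [Ioo_mem_nhds ht.1 ht.2] with x hx
      exact hconst x (Ioo_subset_Icc_self hx)
    have h3 := h1.unique h2
    rcases mul_eq_zero.1 h3 with h4 | h4
    · exact absurd h4 (he t hb).ne
    · exact pow_eq_zero_iff (two_ne_zero) |>.1 h4
  have hwz' : ∀ t ∈ Ico 0 Z, w t = 0 := by
    intro t ht
    rcases ht.1.eq_or_lt with h | h
    · rw [← h, hw0]
    · exact hwz t ⟨h, ht.2⟩
  have huz : ∀ t ∈ Icc 0 Z, u t = u 0 := by
    apply constant_of_has_deriv_right_zero hcu.continuousOn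
    intro x hx
    have := (hu x).hasDerivWithinAt (s := Ici x)
    rwa [hwz' x hx] at this
  intro z
  have hp1 : Function.Periodic u Z := fun x => (hper x).1
  have hp2 : Function.Periodic (fun x => (u x, w x)) Z := fun x => by
    simp only [(hper x).1, (hper x).2]
  obtain ⟨y, hy, hyz⟩ := hp2.exists_mem_Ico₀ hZ z
  simp only [Prod.mk.injEq] at hyz
  rw [hyz.1, hyz.2]
  exact ⟨huz y (Ico_subset_Icc_self hy), hwz' y hy⟩


lemma rot (u w N : ℝ → ℝ) (u0 ω η r T σ A : ℝ) (hω : 0 < ω) (hη : 0 ≤ η)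
    (hu : ∀ t, HasDerivAt u (w t) t)
    (hw : ∀ t, HasDerivAt w (-ω ^ 2 * (u t - u0) + N t) t)
    (hN : ∀ t, |u t - u0| ≤ r → |N t| ≤ η * (|ω * (u t - u0)| + |w t|))
    (hw0 : w 0 = 0) (hA : A = |ω * (u 0 - u0)|) (hA0 : 0 < A) (hAr : 2 * A ≤ ω * r)
    (hσ : 4 * η * T ≤ σ) (hσ1 : σ ≤ 1 / 8) :
    ∀ t ∈ Icc 0 T, |ω * (u t - u0)| ≤ 2 * A ∧ |w t| ≤ 2 * A ∧ |N t| ≤ 4 * η * A ∧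
      |ω * (u t - u0) - ω * (u 0 - u0) * Real.cos (ω * t)| ≤ 2 * σ * A ∧
      |w t + ω * (u 0 - u0) * Real.sin (ω * t)| ≤ 2 * σ * A := by
  have hcu : Continuous u := continuous_iff_continuousAt.2 fun t => (hu t).continuousAt
  have hcw : Continuous w := continuous_iff_continuousAt.2 fun t => (hw t).continuousAt
  set ξ : ℝ → ℝ := fun t => ω * (u t - u0) with hξ
  have hξd : ∀ t, HasDerivAt ξ (ω * w t) t := fun t => ((hu t).sub_const u0).const_mul ω
  have hcos : ∀ t, HasDerivAt (fun t => Real.cos (ω * t)) (-Real.sin (ω * t) * ω) t := by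
    intro t
    have := ((hasDerivAt_id t).const_mul ω).cos
    simpa using this
  have hsin : ∀ t, HasDerivAt (fun t => Real.sin (ω * t)) (Real.cos (ω * t) * ω) t := by
    intro t
    have := ((hasDerivAt_id t).const_mul ω).sin
    simpa using this
  set P : ℝ → ℝ := fun t => ξ t * Real.cos (ω * t) - w t * Real.sin (ω * t) with hP
  set Q : ℝ → ℝ := fun t => ξ t * Real.sin (ω * t) + w t * Real.cos (ω * t) with hQ
  have hPd : ∀ t, HasDerivAt P (-N t * Real.sin (ω * t)) t := by
    intro t
    have := ((hξd t).mul (hcos t)).sub ((hw t).mul (hsin t))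
    refine this.congr_deriv ?_
    simp only [hξ]; ring
  have hQd : ∀ t, HasDerivAt Q (N t * Real.cos (ω * t)) t := by
    intro t
    have := ((hξd t).mul (hsin t)).add ((hw t).mul (hcos t))
    refine this.congr_deriv ?_
    simp only [hξ]; ring
  have hP0 : P 0 = ξ 0 := by simp [hP]
  have hQ0 : Q 0 = 0 := by simp [hQ, hw0]
  have hPQ : ∀ t, ξ t ^ 2 + w t ^ 2 = P t ^ 2 + Q t ^ 2 := by
    intro t
    simp only [hP, hQ]
    linear_combination (-(ξ t ^ 2 + w t ^ 2)) * Real.sin_sq_add_cos_sq (ω * t)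
  have hAsq : A ^ 2 = ξ 0 ^ 2 := by rw [hA, sq_abs]
  have hb : ∀ t, ξ t ^ 2 + w t ^ 2 ≤ 4 * A ^ 2 →
      |ξ t| ≤ 2 * A ∧ |w t| ≤ 2 * A ∧ |N t| ≤ 4 * η * A := by
    intro t ht
    have h1 : |ξ t| ≤ 2 * A := abs_le_of_sq_le_sq (by nlinarith [sq_nonneg (w t)]) (by linarith)
    have h2 : |w t| ≤ 2 * A := abs_le_of_sq_le_sq (by nlinarith [sq_nonneg (ξ t)]) (by linarith)
    refine ⟨h1, h2, ?_⟩
    have h3 : |u t - u0| ≤ r := by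
      have : |ξ t| = ω * |u t - u0| := by simp only [hξ, abs_mul, abs_of_pos hω]
      have h4 : ω * |u t - u0| ≤ ω * r := by linarith
      exact le_of_mul_le_mul_left h4 hω
    have h5 := hN t h3
    have h6 : |ω * (u t - u0)| = |ξ t| := rfl
    rw [h6] at h5
    nlinarith [mul_le_mul_of_nonneg_left (add_le_add h1 h2) hη]
  have hest : ∀ t ∈ Icc 0 T, (∀ s ∈ Icc 0 t, ξ s ^ 2 + w s ^ 2 ≤ 4 * A ^ 2) →
      |P t - ξ 0| ≤ σ * A ∧ |Q t| ≤ σ * A := by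
    intro t ht hs
    have hNb : ∀ s ∈ Icc 0 t, |N s| ≤ 4 * η * A := fun s hs' => (hb s (hs s hs')).2.2
    have h4 : 4 * η * A * t ≤ σ * A := by
      have : 4 * η * t ≤ σ := by nlinarith [mul_le_mul_of_nonneg_left ht.2 hη]
      nlinarith
    have hT1 := Convex.norm_image_sub_le_of_norm_hasDerivWithin_le (C := 4 * η * A)
      (fun x _ => (hPd x).hasDerivWithinAt (s := Icc 0 t))
      (fun x hx => by
        rw [Real.norm_eq_abs, abs_mul, abs_neg]
        have := Real.abs_sin_le_one (ω * x)
        nlinarith [hNb x hx, abs_nonneg (N x)])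
      (convex_Icc 0 t) (left_mem_Icc.2 ht.1) (right_mem_Icc.2 ht.1)
    have hT2 := Convex.norm_image_sub_le_of_norm_hasDerivWithin_le (C := 4 * η * A)
      (fun x _ => (hQd x).hasDerivWithinAt (s := Icc 0 t))
      (fun x hx => by
        rw [Real.norm_eq_abs, abs_mul]
        have := Real.abs_cos_le_one (ω * x)
        nlinarith [hNb x hx, abs_nonneg (N x)])
      (convex_Icc 0 t) (left_mem_Icc.2 ht.1) (right_mem_Icc.2 ht.1)
    rw [Real.norm_eq_abs, Real.norm_eq_abs, sub_zero, abs_of_nonneg ht.1, hP0] at hT1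
    rw [Real.norm_eq_abs, Real.norm_eq_abs, sub_zero, abs_of_nonneg ht.1, hQ0, sub_zero] at hT2
    exact ⟨hT1.trans h4, hT2.trans h4⟩
  have hcξ : Continuous ξ := by fun_prop
  have hstay := bootstrap (fun t => ξ t ^ 2 + w t ^ 2) (by fun_prop) (4 * A ^ 2) T
    (by simp only [hw0]; nlinarith) (by
      intro t ht hs
      obtain ⟨h1, h2⟩ := hest t ht hs
      show ξ t ^ 2 + w t ^ 2 < _
      rw [hPQ t]
      have hξA : |ξ 0| = A := hA.symm
      have h3 : |P t| ≤ 9 / 8 * A := by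
        have := abs_sub_abs_le_abs_sub (P t) (ξ 0)
        nlinarith
      have h4 : |Q t| ≤ 1 / 8 * A := by nlinarith
      rw [← sq_abs (P t), ← sq_abs (Q t)]
      nlinarith [abs_nonneg (P t), abs_nonneg (Q t)])
  intro t ht
  obtain ⟨h1, h2⟩ := hest t ht (fun s hs => (hstay s ⟨hs.1, hs.2.trans ht.2⟩).le)
  obtain ⟨h3, h4, h5⟩ := hb t (hstay t ht).le
  refine ⟨h3, h4, h5, ?_, ?_⟩
  · have e1 : ω * (u t - u0) - ω * (u 0 - u0) * Real.cos (ω * t)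
        = (P t - ξ 0) * Real.cos (ω * t) + Q t * Real.sin (ω * t) := by
      simp only [hP, hQ, hξ]
      linear_combination (-(ω * (u t - u0))) * Real.sin_sq_add_cos_sq (ω * t)
    rw [e1]
    refine (abs_add_le _ _).trans ?_
    rw [abs_mul, abs_mul]
    nlinarith [Real.abs_cos_le_one (ω * t), Real.abs_sin_le_one (ω * t), abs_nonneg (Q t),
      abs_nonneg (P t - ξ 0)]
  · have e1 : w t + ω * (u 0 - u0) * Real.sin (ω * t)
        = -(P t - ξ 0) * Real.sin (ω * t) + Q t * Real.cos (ω * t) := by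
      simp only [hP, hQ, hξ]
      linear_combination (-(w t)) * Real.sin_sq_add_cos_sq (ω * t)
    rw [e1]
    refine (abs_add_le _ _).trans ?_
    rw [abs_mul, abs_mul, abs_neg]
    nlinarith [Real.abs_cos_le_one (ω * t), Real.abs_sin_le_one (ω * t), abs_nonneg (Q t),
      abs_nonneg (P t - ξ 0)]

lemma cos_le_of_mid (α θ : ℝ) (h0 : 0 ≤ α) (h1 : α ≤ θ) (h2 : θ ≤ 2 * Real.pi - α) :
    Real.cos θ ≤ Real.cos α := by
  by_cases h : θ ≤ Real.pi
  · exact Real.cos_le_cos_of_nonneg_of_le_pi h0 h h1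
  · rw [← Real.cos_two_pi_sub θ]
    exact Real.cos_le_cos_of_nonneg_of_le_pi h0 (by linarith) (by linarith)

/-- consequences of the rotation estimate -/
lemma rot_concl (u w N : ℝ → ℝ) (u0 ω η r T σ A ε' : ℝ) (hω : 0 < ω) (hη : 0 ≤ η)
    (hu : ∀ t, HasDerivAt u (w t) t)
    (hw : ∀ t, HasDerivAt w (-ω ^ 2 * (u t - u0) + N t) t)
    (hN : ∀ t, |u t - u0| ≤ r → |N t| ≤ η * (|ω * (u t - u0)| + |w t|))
    (hw0 : w 0 = 0) (hA : A = |ω * (u 0 - u0)|) (hA0 : 0 < A) (hAr : 2 * A ≤ ω * r)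
    (hσ : 4 * η * T ≤ σ) (hσ1 : σ ≤ 1 / 8)
    (hε' : 0 < ε') (hα : ω * ε' ≤ Real.pi / 3) (hs : 2 * σ < Real.sin (ω * ε'))
    (hc : Real.cos (ω * ε') < 1 - 2 * σ) (hT : 2 * Real.pi / ω + ε' ≤ T) (hη16 : 16 * η < ω) :
    (∃ T1, |T1 - 2 * Real.pi / ω| ≤ ε' ∧ w T1 = 0 ∧ 0 < (u T1 - u0) * (u 0 - u0)) ∧
    (∀ Z, 0 < Z → Z ≤ 2 * Real.pi / ω + ε' → u Z = u 0 → w Z = 0 →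
      2 * Real.pi / ω - ε' < Z) := by
  have hR := rot u w N u0 ω η r T σ A hω hη hu hw hN hw0 hA hA0 hAr hσ hσ1
  have hcw : Continuous w := continuous_iff_continuousAt.2 fun t => (hw t).continuousAt
  set x0 := ω * (u 0 - u0) with hx0
  have hx0' : x0 ≠ 0 := by
    intro h; rw [h, abs_zero] at hA; linarith
  have hAsq : A * A = x0 * x0 := by rw [hA, abs_mul_abs_self]
  have hx2 : 0 < x0 * x0 := mul_self_pos.2 hx0'
  have hpi := Real.pi_pos
  have hE : ω * (2 * Real.pi / ω) = 2 * Real.pi := by field_simp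
  have hlow : 0 ≤ 2 * Real.pi / ω - ε' := by
    by_contra hcc
    push Not at hcc
    have : ω * (2 * Real.pi / ω - ε') < 0 := mul_neg_of_pos_of_neg hω hcc
    rw [mul_sub, hE] at this
    linarith
  have hm1 : ∀ t ∈ Icc 0 T, |ω * (u t - u0) * x0 - x0 * x0 * Real.cos (ω * t)|
      ≤ 2 * σ * (x0 * x0) := by
    intro t ht
    have h := (hR t ht).2.2.2.1
    have := mul_le_mul_of_nonneg_right h hA0.le
    nth_rewrite 1 [hA] at this
    rw [← abs_mul] at this
    calc _ = |(ω * (u t - u0) - x0 * Real.cos (ω * t)) * x0| := by congr 1; ring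
      _ ≤ 2 * σ * A * A := this
      _ = _ := by rw [mul_assoc, hAsq]
  have hm2 : ∀ t ∈ Icc 0 T, |w t * x0 + x0 * x0 * Real.sin (ω * t)| ≤ 2 * σ * (x0 * x0) := by
    intro t ht
    have h := (hR t ht).2.2.2.2
    have := mul_le_mul_of_nonneg_right h hA0.le
    nth_rewrite 1 [hA] at this
    rw [← abs_mul] at this
    calc _ = |(w t + x0 * Real.sin (ω * t)) * x0| := by congr 1; ring
      _ ≤ 2 * σ * A * A := this
      _ = _ := by rw [mul_assoc, hAsq]
  constructor
  · have s1 : Real.sin (ω * (2 * Real.pi / ω + ε')) = Real.sin (ω * ε') := by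
      rw [mul_add, hE, add_comm, Real.sin_add_two_pi]
    have s2 : Real.sin (ω * (2 * Real.pi / ω - ε')) = - Real.sin (ω * ε') := by
      rw [mul_sub, hE, Real.sin_two_pi_sub]
    have a1 := (abs_le.1 (hm2 (2 * Real.pi / ω + ε') ⟨by linarith, hT⟩)).2
    have a2 := (abs_le.1 (hm2 (2 * Real.pi / ω - ε') ⟨by linarith, by linarith⟩)).1
    rw [s1] at a1
    rw [s2] at a2
    have hmul := mul_lt_mul_of_pos_right hs hx2
    obtain ⟨T1, hT1, hT1z⟩ := intermediate_value_Icc' (f := fun t => w t * x0)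
      (show 2 * Real.pi / ω - ε' ≤ 2 * Real.pi / ω + ε' by linarith)
      (by fun_prop) (show (0:ℝ) ∈ Icc _ _ from ⟨by linarith, by linarith⟩)
    refine ⟨T1, by rw [abs_le]; constructor <;> linarith [hT1.1, hT1.2], ?_, ?_⟩
    · exact (mul_eq_zero.1 hT1z).resolve_right hx0'
    · have b := (abs_le.1 (hm1 T1 ⟨by linarith [hT1.1], by linarith [hT1.2]⟩)).1
      have hcosT : (1:ℝ) / 2 ≤ Real.cos (ω * T1) := by
        have : Real.cos (ω * T1) = Real.cos |ω * T1 - 2 * Real.pi| := by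
          rw [Real.cos_abs, Real.cos_sub_two_pi]
        rw [this, ← Real.cos_pi_div_three]
        apply Real.cos_le_cos_of_nonneg_of_le_pi (abs_nonneg _) (by linarith)
        refine le_trans ?_ hα
        have : ω * T1 - 2 * Real.pi = ω * (T1 - 2 * Real.pi / ω) := by rw [mul_sub, hE]
        rw [this, abs_mul, abs_of_pos hω]
        apply mul_le_mul_of_nonneg_left _ hω.le
        rw [abs_le]; constructor <;> linarith [hT1.1, hT1.2]
      have hp : 0 < ω * (u T1 - u0) * x0 := by
        have i1 := mul_le_mul_of_nonneg_right hcosT hx2.le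
        have i2 := mul_le_mul_of_nonneg_right hσ1 hx2.le
        linarith
      have : ω * (u T1 - u0) * x0 = ω ^ 2 * ((u T1 - u0) * (u 0 - u0)) := by
        rw [hx0]; ring
      rw [this] at hp
      exact (pos_iff_pos_of_mul_pos hp).1 (by positivity)
  · intro Z hZ hZle huZ hwZ
    by_contra hcc
    push Not at hcc
    have hZT : Z ∈ Icc 0 T := ⟨hZ.le, hZle.trans hT⟩
    have b := (abs_le.1 (hm1 Z hZT)).2
    rw [huZ] at b
    have hcosZ : 1 - 2 * σ ≤ Real.cos (ω * Z) := by
      have : (1 - 2 * σ) * (x0 * x0) ≤ Real.cos (ω * Z) * (x0 * x0) := by linarith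
      exact le_of_mul_le_mul_right this hx2
    by_cases hsm : Z < ε'
    · skip
      obtain ⟨s, hs1, hs2⟩ := exists_hasDerivAt_eq_zero hZ hcw.continuousOn
        (by rw [hw0, hwZ]) (fun x _ => hw x)
      have hsT : s ∈ Icc 0 T := ⟨hs1.1.le, hs1.2.le.trans hZT.2⟩
      have hNs := (hR s hsT).2.2.1
      have c := (abs_le.1 (hm1 s hsT)).1
      have hcoss : (1:ℝ) / 2 ≤ Real.cos (ω * s) := by
        rw [← Real.cos_pi_div_three]
        apply Real.cos_le_cos_of_nonneg_of_le_pi (mul_nonneg hω.le hs1.1.le) (by linarith)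
        refine le_trans ?_ hα
        exact mul_le_mul_of_nonneg_left (by linarith [hs1.2]) hω.le
      have hp : x0 * x0 / 4 ≤ ω * (u s - u0) * x0 := by
        have i1 := mul_le_mul_of_nonneg_right hcoss hx2.le
        have i2 := mul_le_mul_of_nonneg_right hσ1 hx2.le
        linarith
      have e1 : N s = ω * (ω * (u s - u0)) := by linarith
      have e2 : ω * (x0 * x0 / 4) ≤ N s * x0 := by
        rw [e1]
        calc ω * (x0 * x0 / 4) ≤ ω * (ω * (u s - u0) * x0) := mul_le_mul_of_nonneg_left hp hω.le
          _ = _ := by ring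
      have e3 : N s * x0 ≤ 4 * η * (x0 * x0) := by
        calc N s * x0 ≤ |N s| * |x0| := by rw [← abs_mul]; exact le_abs_self _
          _ ≤ 4 * η * A * A := by
            rw [← hA]; exact mul_le_mul_of_nonneg_right hNs hA0.le
          _ = _ := by rw [mul_assoc, hAsq]
      have i1 := mul_lt_mul_of_pos_right hη16 hx2
      linarith
    · push Not at hsm
      have := cos_le_of_mid (ω * ε') (ω * Z) (by positivity)
        (mul_le_mul_of_nonneg_left hsm hω.le)
        (by rw [← hE, ← mul_sub]; exact mul_le_mul_of_nonneg_left hcc hω.le)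
      linarith


lemma neg_left (w : ℝ → ℝ) (s d : ℝ) (hw : HasDerivAt w d s) (hs : w s = 0) (hd : 0 < d) :
    ∃ ρ > 0, ∀ t ∈ Ioo (s - ρ) s, w t < 0 := by
  have h1 : HasDerivAt (fun t => -w (-t)) d (-s) := by
    have h2 : HasDerivAt w d (-(-s)) := by rwa [neg_neg]
    have := (h2.scomp (-s) (hasDerivAt_neg (-s))).neg
    refine this.congr_deriv ?_
    simp
  obtain ⟨ρ, hρ, h⟩ := pos_right _ _ _ h1 (by simp [hs]) hd
  refine ⟨ρ, hρ, fun t ht => ?_⟩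
  have := h (-t) ⟨by linarith [ht.2], by linarith [ht.1]⟩
  rw [neg_neg] at this
  linarith

lemma min_deriv (u w : ℝ → ℝ) (s d : ℝ) (hu : ∀ t, HasDerivAt u (w t) t)
    (hw : HasDerivAt w d s) (hs : w s = 0) (hmin : ∀ x, u s ≤ u x) : 0 ≤ d := by
  by_contra hcc
  push Not at hcc
  obtain ⟨ρ, hρ, h⟩ := pos_right (fun t => -w t) s (-d) hw.neg (by simp [hs]) (by linarith)
  have hcu : Continuous u := continuous_iff_continuousAt.2 fun t => (hu t).continuousAt
  obtain ⟨c, hc, hcd⟩ := exists_hasDerivAt_eq_slope u w (show s < s + ρ / 2 by linarith)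
    hcu.continuousOn (fun x _ => hu x)
  have h1 := h c ⟨hc.1, by linarith [hc.2]⟩
  have h2 : 0 ≤ w c := by
    rw [hcd]
    exact div_nonneg (by linarith [hmin (s + ρ / 2)]) (by linarith)
  linarith

lemma strictMono_arc (u w : ℝ → ℝ) (s t : ℝ) (hu : ∀ t, HasDerivAt u (w t) t)
    (hpos : ∀ x ∈ Ioo s t, 0 < w x) : StrictMonoOn u (Icc s t) := by
  apply strictMonoOn_of_deriv_pos (convex_Icc s t)
  · exact fun x _ => (hu x).continuousAt.continuousWithinAt
  · intro x hx
    rw [interior_Icc] at hx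
    rw [(hu x).deriv]
    exact hpos x hx

lemma exists_inverse (u : ℝ → ℝ) (s t : ℝ) (hst : s ≤ t) (hc : Continuous u)
    (hm : StrictMonoOn u (Icc s t)) :
    ∃ θ : ℝ → ℝ, ContinuousOn θ (Icc (u s) (u t)) ∧
      ∀ y ∈ Icc (u s) (u t), θ y ∈ Icc s t ∧ u (θ y) = y := by
  have hsurj : ∀ y ∈ Icc (u s) (u t), ∃ x ∈ Icc s t, u x = y := fun y hy =>
    intermediate_value_Icc hst hc.continuousOn hy
  choose! θ hθ1 hθ2 using hsurj
  refine ⟨θ, ?_, fun y hy => ⟨hθ1 y hy, hθ2 y hy⟩⟩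
  rw [continuousOn_iff_isClosed]
  intro C hC
  refine ⟨u '' (Icc s t ∩ C), ((isCompact_Icc.inter_right hC).image hc).isClosed, ?_⟩
  ext y
  constructor
  · rintro ⟨h1, h2⟩
    exact ⟨⟨θ y, ⟨hθ1 y h2, h1⟩, hθ2 y h2⟩, h2⟩
  · rintro ⟨⟨x, ⟨hx1, hx2⟩, rfl⟩, h2⟩
    refine ⟨?_, h2⟩
    have : θ (u x) = x := hm.injOn (hθ1 _ h2) hx1 (hθ2 _ h2)
    show θ (u x) ∈ C
    rw [this]; exact hx2

lemma up_arc (u w w' : ℝ → ℝ) (u0 Z tm tM : ℝ)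
    (hu : ∀ t, HasDerivAt u (w t) t) (hw : ∀ t, HasDerivAt w (w' t) t)
    (hsgn : ∀ t, w t = 0 → (u t < u0 ∧ 0 < w' t) ∨ (u0 < u t ∧ w' t < 0))
    (haut : ∀ s t, u s = u t → w s = w t → ∀ z, u (s + z) = u (t + z) ∧ w (s + z) = w (t + z))
    (hZ : 0 < Z) (hper : ∀ z, u (z + Z) = u z ∧ w (z + Z) = w z)
    (hm : ∀ x, u tm ≤ u x) (hM : ∀ x, u x ≤ u tM) (hm0 : w tm = 0) (hM0 : w tM = 0)
    (hmu : u tm < u0) (hMu : u0 < u tM) :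
    ∃ t, tm < t ∧ u t = u tM ∧ w t = 0 ∧ ∀ x ∈ Ioo tm t, 0 < w x := by
  have hcu : Continuous u := continuous_iff_continuousAt.2 fun t => (hu t).continuousAt
  have hcw : Continuous w := continuous_iff_continuousAt.2 fun t => (hw t).continuousAt
  have hdm : 0 < w' tm := by
    rcases hsgn tm hm0 with h | h
    · exact h.2
    · linarith [h.1]
  have hdM : w' tM < 0 := by
    rcases hsgn tM hM0 with h | h
    · linarith [h.1]
    · exact h.2
  obtain ⟨t1, htt1, hwt1, hpos1⟩ := first_zero w hcw tm (tm + Z) _ (hw tm) hm0 hdm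
    (by linarith) (by rw [(hper tm).2, hm0])
  have hut1 : u0 < u t1 := by
    rcases hsgn t1 hwt1 with h | h
    · exfalso
      obtain ⟨ρ, hρ, hneg⟩ := neg_left w t1 _ (hw t1) hwt1 h.2
      obtain ⟨x, hx1, hx2⟩ := exists_between (max_lt htt1 (show t1 - ρ < t1 by linarith))
      have a1 := hpos1 x ⟨(le_max_left _ _).trans_lt hx1, hx2⟩
      have a2 := hneg x ⟨(le_max_right _ _).trans_lt hx1, hx2⟩
      linarith
    · exact h.1
  obtain ⟨s1, hst1, hws1, hpos2⟩ : ∃ s1, s1 < tM ∧ w s1 = 0 ∧ ∀ x ∈ Ioo s1 tM, 0 < w x := by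
    have h1 : HasDerivAt (fun t => w (-t)) (-w' tM) (-tM) := by
      have h2 : HasDerivAt w (w' tM) (-(-tM)) := by rw [neg_neg]; exact hw tM
      have := h2.scomp (-tM) (hasDerivAt_neg (-tM))
      refine this.congr_deriv ?_
      simp
    obtain ⟨x, hx1, hx2, hx3⟩ := first_zero (fun t => w (-t)) (by fun_prop) (-tM) (-tM + Z) _ h1
      (by simp [hM0]) (by linarith) (by linarith) (by
        have := (hper (-(-tM + Z))).2
        rw [← this, ← hM0]
        congr 1
        ring)
    refine ⟨-x, by linarith, hx2, fun y hy => ?_⟩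
    have := hx3 (-y) ⟨by linarith [hy.2], by linarith [hy.1]⟩
    simpa using this
  have hus1 : u s1 < u0 := by
    rcases hsgn s1 hws1 with h | h
    · exact h.1
    · exfalso
      obtain ⟨ρ, hρ, hneg⟩ := pos_right (fun t => -w t) s1 _ (hw s1).neg (by simp [hws1])
        (by linarith [h.2])
      obtain ⟨x, hx1, hx2⟩ := exists_between (lt_min hst1 (show s1 < s1 + ρ by linarith))
      have a1 := hpos2 x ⟨hx1, hx2.trans_le (min_le_left _ _)⟩
      have a2 := hneg x ⟨hx1, hx2.trans_le (min_le_right _ _)⟩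
      linarith
  have hnn1 : ∀ x ∈ Icc tm t1, 0 ≤ w x := by
    intro x hx
    rcases hx.1.eq_or_lt with h | h
    · rw [← h, hm0]
    rcases hx.2.eq_or_lt with h' | h'
    · rw [h', hwt1]
    exact (hpos1 x ⟨h, h'⟩).le
  have hnn2 : ∀ x ∈ Icc s1 tM, 0 ≤ w x := by
    intro x hx
    rcases hx.1.eq_or_lt with h | h
    · rw [← h, hws1]
    rcases hx.2.eq_or_lt with h' | h'
    · rw [h', hM0]
    exact (hpos2 x ⟨h, h'⟩).le
  have hmono1 := strictMono_arc u w tm t1 hu hpos1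
  have hmono2 := strictMono_arc u w s1 tM hu hpos2
  obtain ⟨θ, hθc, hθ⟩ := exists_inverse u tm t1 htt1.le hcu hmono1
  obtain ⟨ts, hts, htsu⟩ := intermediate_value_Icc hst1.le hcu.continuousOn
    (show u t1 ∈ Icc (u s1) (u tM) from ⟨by linarith, hM t1⟩)
  have hmaps : MapsTo u (Icc s1 ts) (Icc (u tm) (u t1)) := by
    intro x hx
    refine ⟨hm x, ?_⟩
    rw [← htsu]
    exact hmono2.monotoneOn ⟨hx.1, hx.2.trans hts.2⟩ hts hx.2
  have hθt1 : θ (u t1) = t1 :=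
    hmono1.injOn (hθ _ ⟨hm t1, le_rfl⟩).1 ⟨htt1.le, le_rfl⟩ (hθ _ ⟨hm t1, le_rfl⟩).2
  have hφc : ContinuousOn (fun t => w (θ (u t)) - w t) (Icc s1 ts) :=
    (hcw.comp_continuousOn (hθc.comp hcu.continuousOn hmaps)).sub hcw.continuousOn
  obtain ⟨q, hq, hq0⟩ := intermediate_value_Icc' hts.1 hφc (show (0:ℝ) ∈ Icc _ _ from by
    constructor
    · simp only [htsu, hθt1, hwt1]
      linarith [hnn2 ts hts]
    · simp only [hws1]
      linarith [hnn1 _ (hθ _ (hmaps (left_mem_Icc.2 hts.1))).1])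
  simp only [sub_eq_zero] at hq0
  have hqq : q ∈ Icc s1 tM := ⟨hq.1, hq.2.trans hts.2⟩
  obtain ⟨hp, hpu⟩ := hθ _ (hmaps hq)
  set p := θ (u q) with hpdef
  have hA := haut p q hpu hq0
  refine ⟨t1, htt1, ?_, hwt1, hpos1⟩
  rcases hp.2.eq_or_lt with hpt | hpt
  · rw [hpt] at hpu hq0
    rw [hwt1] at hq0
    rcases hqq.2.eq_or_lt with h | h
    · rw [hpu, h]
    rcases hqq.1.eq_or_lt with h' | h'
    · rw [← h'] at hpu; linarith
    · linarith [hpos2 q ⟨h', h⟩]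
  rcases hqq.2.eq_or_lt with hqt | hqt
  · rw [hqt] at hpu hq0
    rw [hM0] at hq0
    rcases hp.1.eq_or_lt with h' | h'
    · rw [← h'] at hpu; linarith
    · linarith [hpos1 p ⟨h', hpt⟩]
  rcases lt_trichotomy (t1 - p) (tM - q) with h | h | h
  · have h1 := (hA (t1 - p)).2
    rw [show p + (t1 - p) = t1 by ring, hwt1] at h1
    have := hpos2 (q + (t1 - p)) ⟨by linarith [hqq.1], by linarith⟩
    linarith
  · have h1 := (hA (t1 - p)).1
    rw [show p + (t1 - p) = t1 by ring, h, show q + (tM - q) = tM by ring] at h1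
    exact h1
  · have h1 := (hA (tM - q)).2
    rw [show q + (tM - q) = tM by ring, hM0] at h1
    have := hpos1 (p + (tM - q)) ⟨by linarith [hp.1], by linarith⟩
    linarith

lemma loop (u w w' : ℝ → ℝ) (u0 Z tm tM : ℝ)
    (hu : ∀ t, HasDerivAt u (w t) t) (hw : ∀ t, HasDerivAt w (w' t) t)
    (hsgn : ∀ t, w t = 0 → (u t < u0 ∧ 0 < w' t) ∨ (u0 < u t ∧ w' t < 0))
    (haut : ∀ s t, u s = u t → w s = w t → ∀ z, u (s + z) = u (t + z) ∧ w (s + z) = w (t + z))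
    (hZ : 0 < Z) (hper : ∀ z, u (z + Z) = u z ∧ w (z + Z) = w z)
    (hm : ∀ x, u tm ≤ u x) (hM : ∀ x, u x ≤ u tM) (hm0 : w tm = 0) (hM0 : w tM = 0)
    (hmu : u tm < u0) (hMu : u0 < u tM) :
    ∀ x, w x = 0 → u x = u tm ∨ u x = u tM := by
  obtain ⟨t, htm, hut, hwt, hpos⟩ :=
    up_arc u w w' u0 Z tm tM hu hw hsgn haut hZ hper hm hM hm0 hM0 hmu hMu
  have hu' : ∀ t, HasDerivAt (fun t => u (-t)) (-w (-t)) t := by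
    intro t
    have := (hu (-t)).scomp t (hasDerivAt_neg t)
    refine this.congr_deriv ?_
    simp
  have hw' : ∀ t, HasDerivAt (fun t => -w (-t)) (w' (-t)) t := by
    intro t
    have := ((hw (-t)).scomp t (hasDerivAt_neg t)).neg
    refine this.congr_deriv ?_
    simp
  obtain ⟨t', htm', hut', hwt', hpos'⟩ :=
    up_arc (fun t => u (-t)) (fun t => -w (-t)) (fun t => w' (-t)) u0 Z (-tm) (-tM) hu' hw'
      (fun t ht => hsgn (-t) (by simpa using ht))
      (fun s t hs ht z => by
        have := haut (-s) (-t) hs (by simpa using ht) (-z)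
        simp only [neg_add]
        exact ⟨this.1, by rw [this.2]⟩)
      hZ (fun z => by
        have := hper (-(z + Z))
        rw [show -(z + Z) + Z = -z by ring] at this
        exact ⟨this.1.symm, by simp only [this.2]⟩)
      (fun x => by simpa using hm (-x)) (fun x => by simpa using hM (-x))
      (by simpa using hm0) (by simpa using hM0) (by simpa using hmu) (by simpa using hMu)
  simp only [neg_neg, neg_eq_zero] at hut' hwt'
  set D := t' + tm with hD
  have hDpos : 0 < D := by linarith
  have hA := haut t (-t') (by rw [hut, hut']) (by rw [hwt, hwt'])
  have hneg : ∀ x ∈ Ioo t (t + D), w x < 0 := by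
    intro x hx
    have h1 := (hA (x - t)).2
    rw [show t + (x - t) = x by ring] at h1
    have h2 := hpos' (t' - (x - t)) ⟨by linarith [hx.2], by linarith [hx.1]⟩
    rw [h1]
    rw [show -(t' - (x - t)) = -t' + (x - t) by ring] at h2
    linarith
  have hend := hA D
  rw [show -t' + D = tm by rw [hD]; ring] at hend
  have hB := haut (t + D) tm hend.1 hend.2
  have hL : Function.Periodic (fun x => (u x, w x)) (t + D - tm) := by
    intro x
    have := hB (x - tm)
    rw [show t + D + (x - tm) = x + (t + D - tm) by ring, show tm + (x - tm) = x by ring] at this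
    simp only [this.1, this.2]
  intro x hx
  obtain ⟨y, hy, hxy⟩ := hL.exists_mem_Ico (by linarith) x tm
  simp only [Prod.mk.injEq] at hxy
  rw [hxy.2] at hx
  rw [hxy.1]
  rcases hy.1.eq_or_lt with h | h
  · left; rw [← h]
  rcases lt_trichotomy y t with h2 | h2 | h2
  · linarith [hpos y ⟨h, h2⟩]
  · right; rw [h2, hut]
  · linarith [hneg y ⟨h2, by linarith [hy.2]⟩]


lemma cd_of (φ φ' : ℝ → ℝ) (h : ∀ u ∈ Ioi (0:ℝ), HasDerivAt φ (φ' u) u)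
    (hc : ContinuousOn φ' (Ioi 0)) : ContDiffOn ℝ 1 φ (Ioi 0) := by
  rw [contDiffOn_one_iff_derivWithin (uniqueDiffOn_Ioi 0)]
  refine ⟨fun u hu => (h u hu).differentiableAt.differentiableWithinAt, ?_⟩
  refine hc.congr fun u hu => ?_
  rw [derivWithin_of_isOpen isOpen_Ioi hu, (h u hu).deriv]

section
variable {V V' V'' κ : ℝ → ℝ} {UM τ : ℝ}

lemma V_hasDerivAt (hA1 : A1 V V' V'' UM) : ∀ u ∈ Ioi (0:ℝ), HasDerivAt V (V' u) u :=
  fun u hu => (hA1.1 u (mem_Ici.2 (mem_Ioi.1 hu).le)).hasDerivAt (Ici_mem_nhds hu)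

lemma V_cd (hA1 : A1 V V' V'' UM) : ContDiffOn ℝ 1 V (Ioi 0) :=
  cd_of V V' (V_hasDerivAt hA1) (hA1.2.1.mono Ioi_subset_Ici_self)

lemma V'_cd (hA1 : A1 V V' V'' UM) : ContDiffOn ℝ 1 V' (Ioi 0) :=
  cd_of V' V'' hA1.2.2.1 hA1.2.2.2.1

lemma κ_cd (hA2 : A2 κ) : ContDiffOn ℝ 1 (fun u => κ (1 / u)) (Ioi 0) := by
  refine hA2.1.comp (t := Ioi 0) (g := κ) (f := fun u : ℝ => 1 / u) ?_ ?_
  · exact contDiffOn_const.div contDiffOn_id (fun x hx => ne_of_gt hx)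
  · intro x hx
    exact mem_Ioi.2 (one_div_pos.2 (mem_Ioi.1 hx))

lemma g1_cd (hA2 : A2 κ) (hτ : 0 < τ) : ContDiffOn ℝ 1 (g1TV κ τ) (Ioi 0) :=
  contDiffOn_const.div (contDiffOn_const.mul (κ_cd hA2))
    (fun x hx => (mul_pos hτ (hA2.2 _ (one_div_pos.2 hx))).ne')

lemma g2_cd (hA2 : A2 κ) (hτ : 0 < τ) : ContDiffOn ℝ 1 (g2TV κ τ) (Ioi 0) :=
  contDiffOn_id.div (contDiffOn_const.mul (κ_cd hA2))
    (fun x hx => (mul_pos (by linarith) (hA2.2 _ (one_div_pos.2 hx))).ne')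

lemma g1_pos (hA2 : A2 κ) (hτ : 0 < τ) {u : ℝ} (hu : 0 < u) : 0 < g1TV κ τ u :=
  one_div_pos.2 (mul_pos hτ (hA2.2 _ (one_div_pos.2 hu)))

lemma g2_pos (hA2 : A2 κ) (hτ : 0 < τ) {u : ℝ} (hu : 0 < u) : 0 < g2TV κ τ u :=
  div_pos hu (mul_pos (by linarith) (hA2.2 _ (one_div_pos.2 hu)))

lemma f_cd (hA1 : A1 V V' V'' UM) (K c : ℝ) : ContDiffOn ℝ 1 (fTV V K c) (Ioi 0) :=
  (((contDiffOn_const.mul contDiffOn_id).sub (V_cd hA1)).sub contDiffOn_const).div_const K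

lemma h_cd (hA1 : A1 V V' V'' UM) (K μ : ℝ) : ContDiffOn ℝ 1 (hTV V' K μ) (Ioi 0) :=
  ((contDiffOn_const.sub (V'_cd hA1)).div_const K).add contDiffOn_const

lemma f_hasDerivAt (hA1 : A1 V V' V'' UM) (K c u : ℝ) (hu : 0 < u) :
    HasDerivAt (fTV V K c) (fdTV V' K u) u := by
  have := ((((hasDerivAt_id u).const_mul K).sub (V_hasDerivAt hA1 u hu)).sub_const c).div_const K
  refine this.congr_deriv ?_
  simp [fdTV]

lemma autonomy (hA1 : A1 V V' V'' UM) (hA2 : A2 κ) (hτ : 0 < τ) (K c μ Z : ℝ) (u w : ℝ → ℝ)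
    (hsol : IsTVSol V V' κ τ K c μ u w) (hpos : ∀ z, 0 < u z) (hZ : 0 < Z)
    (hper : ∀ z, u (z + Z) = u z ∧ w (z + Z) = w z) (u' w' : ℝ → ℝ)
    (hsol' : IsTVSol V V' κ τ K c μ u' w')
    (hin : ∀ z, ∃ y, u' z = u y ∧ w' z = w y) (h0 : u 0 = u' 0) (hw0 : w 0 = w' 0) :
    ∀ z, u z = u' z ∧ w z = w' z := by
  have hcu : Continuous u := continuous_iff_continuousAt.2 fun t => (hsol.1 t).continuousAt
  have hcw : Continuous w := continuous_iff_continuousAt.2 fun t => (hsol.2 t).continuousAt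
  set X : ℝ → ℝ × ℝ := fun z => (u z, w z) with hX
  have hp : Function.Periodic X Z := fun z => by simp only [hX, (hper z).1, (hper z).2]
  set S : Set (ℝ × ℝ) := X '' Icc 0 Z with hS
  have hScomp : IsCompact S := isCompact_Icc.image (by fun_prop)
  have hmem : ∀ z, X z ∈ S := by
    intro z
    obtain ⟨y, hy, hyz⟩ := hp.exists_mem_Ico₀ hZ z
    exact ⟨y, Ico_subset_Icc_self hy, hyz.symm⟩
  set Ψ : ℝ × ℝ → ℝ × ℝ := fun p =>
    (p.2, g1TV κ τ p.1 * fTV V K c p.1 + g2TV κ τ p.1 * hTV V' K μ p.1 * p.2) with hΨ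
  have hopen : IsOpen {p : ℝ × ℝ | 0 < p.1} := isOpen_lt continuous_const continuous_fst
  have hcomp : ∀ φ : ℝ → ℝ, ContDiffOn ℝ 1 φ (Ioi 0) →
      ContDiffOn ℝ 1 (fun p : ℝ × ℝ => φ p.1) {p : ℝ × ℝ | 0 < p.1} := fun φ h =>
    h.comp (t := Ioi 0) contDiff_fst.contDiffOn (fun p hp => hp)
  have hΨcd : ContDiffOn ℝ 1 Ψ {p : ℝ × ℝ | 0 < p.1} := by
    refine contDiff_snd.contDiffOn.prodMk ?_
    exact ((hcomp _ (g1_cd hA2 hτ)).mul (hcomp _ (f_cd hA1 K c))).add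
      (((hcomp _ (g2_cd hA2 hτ)).mul (hcomp _ (h_cd hA1 K μ))).mul contDiff_snd.contDiffOn)
  have hSpos : S ⊆ {p : ℝ × ℝ | 0 < p.1} := by
    rintro _ ⟨y, _, rfl⟩
    exact hpos y
  have hLL : LocallyLipschitzOn S Ψ := by
    intro x hx
    obtain ⟨k, t, ht, hk⟩ :=
      (hΨcd.contDiffAt (hopen.mem_nhds (hSpos hx))).exists_lipschitzOnWith
    exact ⟨k, t, mem_nhdsWithin_of_mem_nhds ht, hk⟩
  obtain ⟨k, hk⟩ := hLL.exists_lipschitzOnWith_of_compact hScomp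
  have heq := ODE_solution_unique_univ (v := fun _ => Ψ) (s := fun _ => S) (K := k) (t₀ := 0)
    (f := X) (g := fun z => (u' z, w' z)) (fun _ => hk)
    (fun t => ⟨(hsol.1 t).prodMk (hsol.2 t), hmem t⟩)
    (fun t => ⟨(hsol'.1 t).prodMk (hsol'.2 t), by
      obtain ⟨y, hy1, hy2⟩ := hin t
      simp only [hy1, hy2]
      exact hmem y⟩)
    (by simp only [hX, h0, hw0])
  intro z
  have := congrFun heq z
  simp only [hX, Prod.mk.injEq] at this
  exact this

lemma shift_sol (K c μ s : ℝ) (u w : ℝ → ℝ)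
    (hsol : IsTVSol V V' κ τ K c μ u w) :
    IsTVSol V V' κ τ K c μ (fun z => u (s + z)) (fun z => w (s + z)) := by
  constructor
  · intro z
    exact (hsol.1 (s + z)).comp_const_add s z
  · intro z
    exact (hsol.2 (s + z)).comp_const_add s z

lemma autonomy' (hA1 : A1 V V' V'' UM) (hA2 : A2 κ) (hτ : 0 < τ) (K c μ Z : ℝ) (u w : ℝ → ℝ)
    (hsol : IsTVSol V V' κ τ K c μ u w) (hpos : ∀ z, 0 < u z) (hZ : 0 < Z)
    (hper : ∀ z, u (z + Z) = u z ∧ w (z + Z) = w z) (s t : ℝ) (hs : u s = u t) (ht : w s = w t) :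
    ∀ z, u (s + z) = u (t + z) ∧ w (s + z) = w (t + z) :=
  autonomy hA1 hA2 hτ K c μ Z (fun z => u (s + z)) (fun z => w (s + z)) (shift_sol K c μ s u w hsol)
    (fun z => hpos _) hZ (fun z => by simp only [← add_assoc]; exact hper _) _ _
    (shift_sol K c μ t u w hsol)
    (fun z => ⟨t + z - s, by simp, by simp⟩) (by simpa using hs) (by simpa using ht)

lemma not_equilib (hA1 : A1 V V' V'' UM) (hA2 : A2 κ) (hτ : 0 < τ) (K c μ Z : ℝ) (u w : ℝ → ℝ)
    (hsol : IsTVSol V V' κ τ K c μ u w) (hpos : ∀ z, 0 < u z) (hZ : 0 < Z)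
    (hper : ∀ z, u (z + Z) = u z ∧ w (z + Z) = w z) (hnc : Nonconst u w) (t : ℝ)
    (hwt : w t = 0) : fTV V K c (u t) ≠ 0 := by
  intro hf
  have h := autonomy hA1 hA2 hτ K c μ Z (fun z => u (t + z)) (fun z => w (t + z))
    (shift_sol K c μ t u w hsol)
    (fun z => hpos _) hZ (fun z => by simp only [← add_assoc]; exact hper _)
    (fun _ => u t) (fun _ => 0)
    ⟨fun z => hasDerivAt_const z _, fun z => by
      refine (hasDerivAt_const z _).congr_deriv ?_
      rw [hf]; simp⟩ (fun z => ⟨0, by simp, by simp [hwt]⟩) (by simp) (by simp [hwt])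
  obtain ⟨z, hz⟩ := hnc
  have h1 := h (z - t)
  have h2 := h (0 - t)
  simp only [add_sub_cancel] at h1 h2
  rw [h1.1, h1.2, h2.1, h2.2] at hz
  simp at hz

end


lemma geom (V V' V'' κ : ℝ → ℝ) (τ UM K c K₁ : ℝ) (uMx umx : ℝ → ℝ)
    (hA1 : A1 V V' V'' UM)
    (huMx : UMaxHyp V' UM uMx) (humx : UMinHyp V' UM umx)
    (hK1 : K1Hyp V V' UM umx K₁)
    (hC : CondC V' κ UM K₁ K) (u0 u2 : ℝ)
    (h : (∃ u1, ZerosD1 V K c u1 u0 u2) ∨ ((K, c) ∈ D2 V V' umx K₁ ∧ ZerosD2 V K c u0 u2)) :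
    0 < K ∧ K < V' u0 ∧ 0 < u0 ∧ fTV V K c u0 = 0 ∧ ∃ uM um, 0 < uM ∧ uM < u0 ∧ u0 < um ∧
      StrictMonoOn (fTV V K c) (Icc 0 uM) ∧ StrictAntiOn (fTV V K c) (Icc uM um) ∧
      StrictMonoOn (fTV V K c) (Ici um) := by
  obtain ⟨hV, hV'c, hV', hV''c, hV'pos, _, _, hUM, hUMmax, hV''z⟩ := id hA1
  have hV0 : 0 ≤ V' 0 := by
    have h1 : Tendsto V' (nhdsWithin 0 (Ioi 0)) (nhds (V' 0)) :=
      (hV'c 0 (mem_Ici.2 le_rfl)).mono_left (nhdsWithin_mono _ Ioi_subset_Ici_self)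
    refine ge_of_tendsto h1 ?_
    filter_upwards [self_mem_nhdsWithin] with x hx
    exact (hV'pos x (mem_Ioi.1 hx)).le
  have hK0 : V' 0 < K := by
    rcases hC with h | h
    · exact hK1.1.trans h.1
    · exact h.2.1
  have hKM : K < V' UM := by
    rcases hC with h | h
    · exact h.2
    · exact lt_of_le_of_lt h.2.2 hK1.2.1
  have hKpos : 0 < K := by linarith
  obtain ⟨huM, huMK⟩ := huMx K hK0 hKM
  obtain ⟨hum, humK⟩ := humx K hKpos hKM
  set uM := uMx K
  set um := umx K
  have hmono : StrictMonoOn V' (Icc 0 UM) := by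
    have hcase := hasDerivWithinAt_forall_lt_or_forall_gt_of_forall_ne (convex_Ioo 0 UM)
      (f := V') (f' := V'') (m := 0)
      (fun x hx => (hV' x hx.1).hasDerivWithinAt)
      (fun x hx hx0 => (hx.2.ne) ((hV''z x hx.1).1 hx0))
    have hcont : ContinuousOn V' (Icc 0 UM) := hV'c.mono Icc_subset_Ici_self
    rcases hcase with h1 | h1
    · exfalso
      have : StrictAntiOn V' (Icc 0 UM) := by
        apply strictAntiOn_of_deriv_neg (convex_Icc _ _) hcont
        intro x hx
        rw [interior_Icc] at hx
        rw [(hV' x hx.1).deriv]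
        exact h1 x hx
      have := this ⟨huM.1.le, huM.2.le⟩ ⟨hUM.le, le_rfl⟩ huM.2
      linarith
    · apply strictMonoOn_of_deriv_pos (convex_Icc _ _) hcont
      intro x hx
      rw [interior_Icc] at hx
      rw [(hV' x hx.1).deriv]
      exact h1 x hx
  have hanti : StrictAntiOn V' (Ici UM) := by
    have hcase := hasDerivWithinAt_forall_lt_or_forall_gt_of_forall_ne (convex_Ioi UM)
      (f := V') (f' := V'') (m := 0)
      (fun x hx => (hV' x (mem_Ioi.2 (hUM.trans (mem_Ioi.1 hx)))).hasDerivWithinAt)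
      (fun x hx hx0 => (mem_Ioi.1 hx).ne' ((hV''z x (hUM.trans (mem_Ioi.1 hx))).1 hx0))
    have hcont : ContinuousOn V' (Ici UM) := hV'c.mono (Ici_subset_Ici.2 hUM.le)
    rcases hcase with h1 | h1
    · apply strictAntiOn_of_deriv_neg (convex_Ici _) hcont
      intro x hx
      rw [interior_Ici] at hx
      rw [(hV' x (mem_Ioi.2 (hUM.trans (mem_Ioi.1 hx)))).deriv]
      exact h1 x hx
    · exfalso
      have : StrictMonoOn V' (Ici UM) := by
        apply strictMonoOn_of_deriv_pos (convex_Ici _) hcont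
        intro x hx
        rw [interior_Ici] at hx
        rw [(hV' x (mem_Ioi.2 (hUM.trans (mem_Ioi.1 hx)))).deriv]
        exact h1 x hx
      have := this (mem_Ici.2 le_rfl) (mem_Ici.2 hum.le) hum
      linarith
  have hfc : ContinuousOn (fTV V K c) (Ici 0) := by
    have hVc : ContinuousOn V (Ici 0) := fun x hx => (hV x hx).continuousWithinAt
    exact ((((continuousOn_const.mul continuousOn_id).sub hVc).sub continuousOn_const).div_const K)
  have hmid : ∀ x, uM < x → x < um → K < V' x := by
    intro x h1 h2
    by_cases hx : x ≤ UM
    · have := hmono ⟨huM.1.le, huM.2.le⟩ ⟨huM.1.le.trans h1.le, hx⟩ h1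
      linarith
    · push Not at hx
      have := hanti (mem_Ici.2 hx.le) (mem_Ici.2 hum.le) h2
      linarith
  have hS1 : StrictMonoOn (fTV V K c) (Icc 0 uM) := by
    apply strictMonoOn_of_deriv_pos (convex_Icc _ _) (hfc.mono Icc_subset_Ici_self)
    intro x hx
    rw [interior_Icc] at hx
    rw [(f_hasDerivAt hA1 K c x hx.1).deriv]
    have := hmono ⟨hx.1.le, hx.2.le.trans huM.2.le⟩ ⟨huM.1.le, huM.2.le⟩ hx.2
    exact div_pos (by linarith) hKpos
  have hS2 : StrictAntiOn (fTV V K c) (Icc uM um) := by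
    apply strictAntiOn_of_deriv_neg (convex_Icc _ _)
      (hfc.mono fun x hx => mem_Ici.2 (huM.1.le.trans hx.1))
    intro x hx
    rw [interior_Icc] at hx
    rw [(f_hasDerivAt hA1 K c x (huM.1.trans hx.1)).deriv]
    have := hmid x hx.1 hx.2
    exact div_neg_of_neg_of_pos (by linarith) hKpos
  have hS3 : StrictMonoOn (fTV V K c) (Ici um) := by
    apply strictMonoOn_of_deriv_pos (convex_Ici _)
      (hfc.mono (Ici_subset_Ici.2 (hUM.le.trans hum.le)))
    intro x hx
    rw [interior_Ici] at hx
    have hx' := mem_Ioi.1 hx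
    rw [(f_hasDerivAt hA1 K c x (hUM.trans (hum.trans hx'))).deriv]
    have := hanti (mem_Ici.2 hum.le) (mem_Ici.2 (hum.le.trans hx'.le)) hx'
    exact div_pos (by linarith) hKpos
  have hkey : uM < u0 ∧ u0 < um ∧ fTV V K c u0 = 0 := by
    rcases h with ⟨u1, h1p, h10, h02, hf1, hf0, hf2, _⟩ | ⟨hD2, h0p, h02, hf0, hf2, _⟩
    · refine ⟨?_, ?_, hf0⟩
      · by_contra hcc
        push Not at hcc
        have := hS1 ⟨h1p.le, h10.le.trans hcc⟩ ⟨h1p.le.trans h10.le, hcc⟩ h10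
        linarith
      · by_contra hcc
        push Not at hcc
        have := hS3 (mem_Ici.2 hcc) (mem_Ici.2 (hcc.trans h02.le)) h02
        linarith
    · refine ⟨?_, ?_, hf0⟩
      · by_contra hcc
        push Not at hcc
        have h1 := hS1 ⟨le_rfl, huM.1.le⟩ ⟨h0p.le, hcc⟩ h0p
        have hc0 : c ≤ c0v V := by
          rcases hD2 with h | h
          · exact h.2.2.le
          · exact h.2.2.2.le
        have h2 : 0 ≤ fTV V K c 0 := by
          unfold fTV
          unfold c0v at hc0
          exact div_nonneg (by linarith) hKpos.le
        linarith
      · by_contra hcc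
        push Not at hcc
        have := hS3 (mem_Ici.2 hcc) (mem_Ici.2 (hcc.trans h02.le)) h02
        linarith
  exact ⟨hKpos, hmid u0 hkey.1 hkey.2.1, huM.1.trans hkey.1, hkey.2.2, uM, um, huM.1, hkey.1,
    hkey.2.1, hS1, hS2, hS3⟩

lemma orbit {V V' V'' κ : ℝ → ℝ} {UM τ : ℝ} (hA1 : A1 V V' V'' UM) (hA2 : A2 κ) (hτ : 0 < τ)
    (K c μ Z : ℝ) (u w : ℝ → ℝ)
    (hsol : IsTVSol V V' κ τ K c μ u w) (hpos : ∀ z, 0 < u z) (hZ : 0 < Z)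
    (hper : ∀ z, u (z + Z) = u z ∧ w (z + Z) = w z) (hnc : Nonconst u w)
    (u0 uM um : ℝ) (hf0 : fTV V K c u0 = 0) (huM : 0 < uM) (h1 : uM < u0) (h2 : u0 < um)
    (hS1 : StrictMonoOn (fTV V K c) (Icc 0 uM)) (hS2 : StrictAntiOn (fTV V K c) (Icc uM um))
    (hS3 : StrictMonoOn (fTV V K c) (Ici um)) (s t : ℝ) (hs : w s = 0) (ht : w t = 0)
    (hst : 0 < (u s - u0) * (u t - u0)) : u s = u t := by
  have hcu : Continuous u := continuous_iff_continuousAt.2 fun t => (hsol.1 t).continuousAt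
  have hp : Function.Periodic u Z := fun z => (hper z).1
  obtain ⟨tm, htm, hmin⟩ := isCompact_Icc.exists_isMinOn (s := Icc 0 Z) ⟨0, le_rfl, hZ.le⟩
    hcu.continuousOn
  obtain ⟨tM, htM, hmax⟩ := isCompact_Icc.exists_isMaxOn (s := Icc 0 Z) ⟨0, le_rfl, hZ.le⟩
    hcu.continuousOn
  have hm : ∀ x, u tm ≤ u x := by
    intro x
    obtain ⟨y, hy, hxy⟩ := hp.exists_mem_Ico₀ hZ x
    rw [hxy]; exact hmin (Ico_subset_Icc_self hy)
  have hM : ∀ x, u x ≤ u tM := by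
    intro x
    obtain ⟨y, hy, hxy⟩ := hp.exists_mem_Ico₀ hZ x
    rw [hxy]; exact hmax (Ico_subset_Icc_self hy)
  have hm0 : w tm = 0 :=
    IsLocalMin.hasDerivAt_eq_zero (Eventually.of_forall hm) (hsol.1 tm)
  have hM0 : w tM = 0 :=
    IsLocalMax.hasDerivAt_eq_zero (Eventually.of_forall hM) (hsol.1 tM)
  have hne := not_equilib hA1 hA2 hτ K c μ Z u w hsol hpos hZ hper hnc
  have hfm : 0 < fTV V K c (u tm) := by
    have h := min_deriv u w tm _ hsol.1 (hsol.2 tm) hm0 hm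
    rw [hm0, mul_zero, add_zero] at h
    exact lt_of_le_of_ne (nonneg_of_mul_nonneg_right h (g1_pos hA2 hτ (hpos tm)))
      (hne tm hm0).symm
  have hfM : fTV V K c (u tM) < 0 := by
    have h := min_deriv (fun t => -u t) (fun t => -w t) tM _ (fun t => (hsol.1 t).neg)
      (hsol.2 tM).neg (by simp [hM0]) (fun x => by simpa using hM x)
    rw [hM0, mul_zero, add_zero] at h
    have h' : g1TV κ τ (u tM) * fTV V K c (u tM) ≤ 0 := by linarith
    have := nonpos_of_mul_nonpos_right h' (g1_pos hA2 hτ (hpos tM))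
    exact lt_of_le_of_ne this (hne tM hM0)
  have hmM := hm tM
  have hfpos : ∀ x, uM ≤ x → x < u0 → 0 < fTV V K c x := by
    intro x hx1 hx2
    have := hS2 ⟨hx1, hx2.le.trans h2.le⟩ ⟨h1.le, h2.le⟩ hx2
    linarith
  have hfneg : ∀ x, u0 < x → x ≤ um → fTV V K c x < 0 := by
    intro x hx1 hx2
    have := hS2 ⟨h1.le, h2.le⟩ ⟨h1.le.trans hx1.le, hx2⟩ hx1
    linarith
  have hMu : u0 < u tM := by
    by_contra hcc
    push Not at hcc
    by_cases hx : uM ≤ u tM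
    · rcases hcc.eq_or_lt with h | h
      · rw [h] at hfM; linarith
      · linarith [hfpos _ hx h]
    · push Not at hx
      have := hS1.monotoneOn ⟨(hpos tm).le, hmM.trans hx.le⟩ ⟨(hpos tM).le, hx.le⟩ hmM
      linarith
  have hmu : u tm < u0 := by
    by_contra hcc
    push Not at hcc
    by_cases hx : u tm ≤ um
    · rcases hcc.eq_or_lt with h | h
      · rw [← h] at hfm; linarith
      · linarith [hfneg _ h hx]
    · push Not at hx
      have := hS3.monotoneOn (mem_Ici.2 hx.le) (mem_Ici.2 (hx.le.trans hmM)) hmM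
      linarith
  have hloop := loop u w _ u0 Z tm tM hsol.1 hsol.2 (by
    intro x hx
    have hg := g1_pos hA2 hτ (hpos x)
    simp only [hx, mul_zero, add_zero]
    rcases lt_trichotomy (u x) u0 with h | h | h
    · left
      refine ⟨h, mul_pos hg ?_⟩
      by_cases hx : uM ≤ u x
      · exact hfpos _ hx h
      · push Not at hx
        have := hS1.monotoneOn ⟨(hpos tm).le, (hm x).trans hx.le⟩ ⟨(hpos x).le, hx.le⟩ (hm x)
        linarith
    · exact absurd (by rw [h, hf0]) (hne x hx)
    · right
      refine ⟨h, mul_neg_of_pos_of_neg hg ?_⟩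
      by_cases hx : u x ≤ um
      · exact hfneg _ h hx
      · push Not at hx
        have := hS3.monotoneOn (mem_Ici.2 hx.le) (mem_Ici.2 (hx.le.trans (hM x))) (hM x)
        linarith)
    (autonomy' hA1 hA2 hτ K c μ Z u w hsol hpos hZ hper) hZ hper hm hM hm0 hM0 hmu hMu
  rcases hloop s hs with a | a <;> rcases hloop t ht with b | b
  · rw [a, b]
  · rw [a, b] at hst; nlinarith
  · rw [a, b] at hst; nlinarith
  · rw [a, b]

lemma step1 {V V' V'' κ : ℝ → ℝ} {UM τ : ℝ} (hA1 : A1 V V' V'' UM) (hA2 : A2 κ) (hτ : 0 < τ)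
    (K c : ℝ) (u0 uM um : ℝ) (hf0 : fTV V K c u0 = 0) (huM : 0 < uM) (h1 : uM < u0) (h2 : u0 < um)
    (hS2 : StrictAntiOn (fTV V K c) (Icc uM um)) (ε : ℝ) (hε : 0 < ε) :
    ∃ δ > 0, ∀ (μ Z : ℝ) (u w : ℝ → ℝ), IsTVSol V V' κ τ K c μ u w → (∀ z, 0 < u z) → 0 < Z →
      (∀ z, u (z + Z) = u z ∧ w (z + Z) = w z) → Nonconst u w → w 0 = 0 → |u 0 - u0| < δ →
      |μ + fdTV V' K u0| < ε := by
  have hu0 : 0 < u0 := huM.trans h1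
  have hfdc : ContinuousAt (fdTV V' K) u0 := by
    have : ContinuousOn V' (Ioi 0) := hA1.2.1.mono Ioi_subset_Ici_self
    exact (continuousAt_const.sub (this.continuousAt (Ioi_mem_nhds hu0))).div_const K
  obtain ⟨r1, hr1, hfd⟩ := Metric.continuousAt_iff.1 hfdc ε hε
  obtain ⟨r, hr, hrm⟩ : ∃ r > 0, r < min r1 (min (u0 - uM) (um - u0)) :=
    exists_between (lt_min hr1 (lt_min (by linarith) (by linarith)))
  have hrr1 : r < r1 := hrm.trans_le (min_le_left _ _)
  have hrM : r < u0 - uM := hrm.trans_le ((min_le_right _ _).trans (min_le_left _ _))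
  have hrm' : r < um - u0 := hrm.trans_le ((min_le_right _ _).trans (min_le_right _ _))
  set Φ : ℝ → ℝ := fun x => g1TV κ τ x * fTV V K c x with hΦ
  have hΦc : ContinuousOn Φ (Ioi 0) :=
    (g1_cd hA2 hτ).continuousOn.mul (f_cd hA1 K c).continuousOn
  set G : ℝ → ℝ := fun x => ∫ y in u0..x, Φ y with hGdef
  have hG : ∀ x, 0 < x → HasDerivAt G (Φ x) x := by
    intro x hx
    have hsub : uIcc u0 x ⊆ Ioi 0 := by
      intro y hy
      exact mem_Ioi.2 (lt_of_lt_of_le (lt_min hu0 hx) hy.1)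
    apply intervalIntegral.integral_hasDerivAt_right
    · exact (hΦc.mono hsub).intervalIntegrable
    · exact hΦc.stronglyMeasurableAtFilter isOpen_Ioi x hx
    · exact hΦc.continuousAt (Ioi_mem_nhds hx)
  have hGc : ContinuousOn G (Ioi 0) := fun x hx => (hG x hx).continuousAt.continuousWithinAt
  have hG1 : G (u0 + r) < G u0 := by
    have : StrictAntiOn G (Icc u0 (u0 + r)) := by
      apply strictAntiOn_of_deriv_neg (convex_Icc _ _)
        (hGc.mono fun x hx => mem_Ioi.2 (hu0.trans_le hx.1))
      intro x hx
      rw [interior_Icc] at hx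
      have hx0 : 0 < x := hu0.trans hx.1
      rw [(hG x hx0).deriv]
      have := hS2 ⟨h1.le, h2.le⟩ ⟨h1.le.trans hx.1.le, by linarith [hx.2]⟩ hx.1
      exact mul_neg_of_pos_of_neg (g1_pos hA2 hτ hx0) (by linarith)
    exact this ⟨le_rfl, by linarith⟩ ⟨by linarith, le_rfl⟩ (by linarith)
  have hG2 : G (u0 - r) < G u0 := by
    have : StrictMonoOn G (Icc (u0 - r) u0) := by
      apply strictMonoOn_of_deriv_pos (convex_Icc _ _)
        (hGc.mono fun x hx => mem_Ioi.2 (by linarith [hx.1]))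
      intro x hx
      rw [interior_Icc] at hx
      have hx0 : 0 < x := by linarith [hx.1]
      rw [(hG x hx0).deriv]
      have := hS2 ⟨by linarith [hx.1], by linarith [hx.2]⟩ ⟨h1.le, h2.le⟩ hx.2
      exact mul_pos (g1_pos hA2 hτ hx0) (by linarith)
    exact this ⟨le_rfl, by linarith⟩ ⟨by linarith, le_rfl⟩ (by linarith)
  have hev := ((hG u0 hu0).continuousAt.eventually (lt_mem_nhds hG1)).and
    ((hG u0 hu0).continuousAt.eventually (lt_mem_nhds hG2))
  obtain ⟨δ, hδ, hδG⟩ := Metric.eventually_nhds_iff.1 hev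
  refine ⟨min δ r, lt_min hδ hr, ?_⟩
  intro μ Z u w hsol hpos hZ hper hnc hw0 hq
  have hq1 : dist (u 0) u0 < δ := hq.trans_le (min_le_left _ _)
  have hq2 : |u 0 - u0| < r := hq.trans_le (min_le_right _ _)
  obtain ⟨hGq1, hGq2⟩ := hδG hq1
  have hGr : ∀ x, |x - u0| ≤ r → HasDerivAt G (Φ x) x := by
    intro x hx
    apply hG
    have := (abs_le.1 hx).1
    linarith
  by_contra hcc
  push Not at hcc
  have hfdr : ∀ t, |u t - u0| ≤ r → |fdTV V' K (u t) - fdTV V' K u0| < ε := fun t ht =>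
    hfd (show dist (u t) u0 < r1 from ht.trans_lt hrr1)
  have hres : ∀ z, u z = u 0 ∧ w z = 0 := by
    rcases le_abs.1 hcc with hm | hm
    · have hr' := damp (fun t => u (-t)) (fun t => -w (-t)) Φ G
        (fun t => -(g2TV κ τ (u (-t)) * hTV V' K μ (u (-t)))) u0 r Z
        (fun t => ((hsol.1 (-t)).scomp t (hasDerivAt_neg t)).congr_deriv (by simp))
        (fun t => ((hsol.2 (-t)).scomp t (hasDerivAt_neg t)).neg.congr_deriv (by
          simp [hΦ])) hGr
        (fun t ht => by
          have := (abs_lt.1 (hfdr (-t) ht)).1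
          have hh : 0 < hTV V' K μ (u (-t)) := by unfold hTV; linarith
          have := mul_pos (g2_pos hA2 hτ (hpos (-t))) hh
          linarith)
        (by simpa using hq2) (by simpa using hw0) (by simpa using hGq1) (by simpa using hGq2)
        hZ (fun z => by
          have := hper (-(z + Z))
          rw [show -(z + Z) + Z = -z by ring] at this
          exact ⟨this.1.symm, by simp only [this.2]⟩)
      intro z
      have := hr' (-z)
      simpa using this
    · exact damp u w Φ G (fun t => g2TV κ τ (u t) * hTV V' K μ (u t)) u0 r Z hsol.1 hsol.2 hGr
        (fun t ht => by
          have := (abs_lt.1 (hfdr t ht)).2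
          have hh : hTV V' K μ (u t) < 0 := by unfold hTV; linarith
          exact mul_neg_of_pos_of_neg (g2_pos hA2 hτ (hpos t)) hh)
        hq2 hw0 hGq1 hGq2 hZ hper
  obtain ⟨z, hz⟩ := hnc
  rw [(hres z).1, (hres z).2, hw0] at hz
  simp at hz

set_option maxHeartbeats 4000000 in
theorem stmt18
    (V V' V'' κ : ℝ → ℝ) (τ UM K c K₁ : ℝ) (uMx umx : ℝ → ℝ)
    (hA1 : A1 V V' V'' UM) (hA2 : A2 κ) (hτ : 0 < τ) (hK : K ≠ 0)
    (huMx : UMaxHyp V' UM uMx) (humx : UMinHyp V' UM umx)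
    (hK1 : K1Hyp V V' UM umx K₁)
    (hC : CondC V' κ UM K₁ K) (u0 u2 : ℝ) (Adm : Set ℝ)
    (hAdm :
      ((K, c) ∈ D1 V V' UM uMx umx ∧
        ∃ u1 μb μf, ZerosD1 V K c u1 u0 u2 ∧
          (∀ μ, HasHE1 V V' κ τ K c μ u1 u2 ↔ μ = μb) ∧
          (∀ μ, HasHE2 V V' κ τ K c μ u1 u2 ↔ μ = μf) ∧
          ((μf ≤ μb ∧ Adm = Ioo u1 u0) ∨ (μb < μf ∧ Adm = Ioo u0 u2))) ∨
      ((K, c) ∈ D2 V V' umx K₁ ∧ ZerosD2 V K c u0 u2 ∧ Adm = Ioo u0 u2)) :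
    0 < Real.sqrt (- (g1TV κ τ u0 * fdTV V' K u0)) ∧
    ∀ ε : ℝ, 0 < ε → ∃ δ : ℝ, 0 < δ ∧
      ∀ q ∈ Adm, |q - u0| < δ →
        ∀ (μ Z : ℝ) (u w : ℝ → ℝ), IsTVSol V V' κ τ K c μ u w → (∀ z, 0 < u z) →
          u 0 = q → w 0 = 0 → IsMinPeriod u w Z → Nonconst u w →
          |μ + fdTV V' K u0| < ε ∧
          |Z - 2 * Real.pi / Real.sqrt (- (g1TV κ τ u0 * fdTV V' K u0))| < ε ∧
          ∀ z, Real.sqrt ((u z - u0) ^ 2 + (w z) ^ 2) < ε := by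
  have hz : (∃ u1, ZerosD1 V K c u1 u0 u2) ∨ ((K, c) ∈ D2 V V' umx K₁ ∧ ZerosD2 V K c u0 u2) := by
    rcases hAdm with ⟨_, u1, _, _, h, _⟩ | ⟨h1, h2, _⟩
    · exact Or.inl ⟨u1, h⟩
    · exact Or.inr ⟨h1, h2⟩
  have hAdmne : ∀ q ∈ Adm, q ≠ u0 := by
    intro q hq
    rcases hAdm with ⟨_, u1, _, _, _, _, _, (⟨_, h⟩ | ⟨_, h⟩)⟩ | ⟨_, _, h⟩
    · rw [h] at hq; exact hq.2.ne
    · rw [h] at hq; exact hq.1.ne'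
    · rw [h] at hq; exact hq.1.ne'
  obtain ⟨hKpos, hKV, hu0, hf0, uM, um, huM, h1, h2, hS1, hS2, hS3⟩ :=
    geom V V' V'' κ τ UM K c K₁ uMx umx hA1 huMx humx hK1 hC u0 u2 hz
  have hfd0 : fdTV V' K u0 < 0 := div_neg_of_neg_of_pos (by linarith) hKpos
  have hg10 := g1_pos hA2 hτ hu0
  have hωsq : 0 < -(g1TV κ τ u0 * fdTV V' K u0) := by
    have := mul_neg_of_pos_of_neg hg10 hfd0
    linarith
  have hω : 0 < Real.sqrt (-(g1TV κ τ u0 * fdTV V' K u0)) := Real.sqrt_pos.2 hωsq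
  have hω2 := Real.sq_sqrt hωsq.le
  refine ⟨hω, ?_⟩
  set ω := Real.sqrt (-(g1TV κ τ u0 * fdTV V' K u0)) with hωdef
  intro ε hε
  have hpi := Real.pi_pos
  -- constants
  obtain ⟨ε', hε', hε'1, hε'2, hε'3⟩ :
      ∃ ε' > 0, ε' < ε ∧ ε' ≤ 1 ∧ ω * ε' ≤ Real.pi / 3 := by
    refine ⟨min (ε / 2) (min 1 (Real.pi / 3 / ω)), by positivity, ?_, ?_, ?_⟩
    · exact (min_le_left _ _).trans_lt (by linarith)
    · exact (min_le_right _ _).trans (min_le_left _ _)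
    · rw [mul_comm, ← le_div_iff₀ hω]
      exact (min_le_right _ _).trans (min_le_right _ _)
  have hα0 : 0 < ω * ε' := mul_pos hω hε'
  have hsin : 0 < Real.sin (ω * ε') := Real.sin_pos_of_pos_of_lt_pi hα0 (by linarith)
  have hcos1 : Real.cos (ω * ε') < 1 := by
    have := Real.cos_lt_cos_of_nonneg_of_le_pi (le_refl 0) (by linarith) hα0
    rwa [Real.cos_zero] at this
  have hcos2 : 1 / 2 ≤ Real.cos (ω * ε') := by
    rw [← Real.cos_pi_div_three]
    exact Real.cos_le_cos_of_nonneg_of_le_pi hα0.le (by linarith) hε'3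
  obtain ⟨σ, hσ, hσ1, hσ2, hσ3⟩ : ∃ σ > 0, σ ≤ 1 / 8 ∧ 2 * σ < Real.sin (ω * ε') ∧
      Real.cos (ω * ε') < 1 - 2 * σ := by
    have a1 := min_le_left ((1 - Real.cos (ω * ε')) / 4) (Real.sin (ω * ε') / 4)
    have a2 := min_le_right ((1 - Real.cos (ω * ε')) / 4) (Real.sin (ω * ε') / 4)
    refine ⟨min ((1 - Real.cos (ω * ε')) / 4) (Real.sin (ω * ε') / 4),
      lt_min (by linarith) (by linarith), ?_, ?_, ?_⟩ <;> linarith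
  set T := 2 * Real.pi / ω + 1 with hT
  have hTpos : 0 < T := by positivity
  obtain ⟨η, hη, hη1, hη2⟩ : ∃ η > 0, 4 * η * T ≤ σ ∧ 16 * η < ω := by
    refine ⟨min (σ / (4 * T)) (ω / 32), by positivity, ?_, ?_⟩
    · have := min_le_left (σ / (4 * T)) (ω / 32)
      rw [le_div_iff₀ (by positivity)] at this
      linarith
    · have := min_le_right (σ / (4 * T)) (ω / 32)
      linarith
  -- local estimates
  have hΦd : HasDerivAt (fun x => g1TV κ τ x * fTV V K c x) (-ω ^ 2) u0 := by
    have hg1d : DifferentiableAt ℝ (g1TV κ τ) u0 :=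
      ((g1_cd hA2 hτ).differentiableOn one_ne_zero).differentiableAt (Ioi_mem_nhds hu0)
    have := hg1d.hasDerivAt.mul (f_hasDerivAt hA1 K c u0 hu0)
    refine this.congr_deriv ?_
    rw [hf0, hω2]
    ring
  have hev1 := (hasDerivAt_iff_isLittleO.1 hΦd).def (show 0 < η * ω by positivity)
  have hg2c : ContinuousAt (g2TV κ τ) u0 :=
    (g2_cd hA2 hτ).continuousOn.continuousAt (Ioi_mem_nhds hu0)
  have hfdc : ContinuousAt (fdTV V' K) u0 := by
    have : ContinuousOn V' (Ioi 0) := hA1.2.1.mono Ioi_subset_Ici_self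
    exact (continuousAt_const.sub (this.continuousAt (Ioi_mem_nhds hu0))).div_const K
  set C := g2TV κ τ u0 + 1 with hCdef
  have hCpos : 0 < C := by linarith [g2_pos hA2 hτ hu0]
  have hev2 : ∀ᶠ x in nhds u0, g2TV κ τ x < C :=
    hg2c.eventually (gt_mem_nhds (by linarith))
  have hev3 : ∀ᶠ x in nhds u0, dist (fdTV V' K x) (fdTV V' K u0) < η / (2 * C) :=
    Metric.tendsto_nhds.1 hfdc _ (by positivity)
  obtain ⟨r1, hr1, hloc⟩ := Metric.eventually_nhds_iff.1 (hev1.and (hev2.and hev3))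
  obtain ⟨δ1, hδ1, hstep⟩ := step1 hA1 hA2 hτ K c u0 uM um hf0 huM h1 h2 hS2
    (min ε (η / (2 * C))) (lt_min hε (by positivity))
  refine ⟨min δ1 (min (r1 / 4) (ε / (2 * (1 + ω)))), by positivity, ?_⟩
  intro q hqA hq μ Z u w hsol hpos huq hw0 hZmin hnc
  obtain ⟨hZ, hper, hZleast⟩ := hZmin
  have hq1 : |q - u0| < δ1 := hq.trans_le (min_le_left _ _)
  have hq2 : |q - u0| < r1 / 4 := hq.trans_le ((min_le_right _ _).trans (min_le_left _ _))
  have hq3 : |q - u0| < ε / (2 * (1 + ω)) :=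
    hq.trans_le ((min_le_right _ _).trans (min_le_right _ _))
  have hμ := hstep μ Z u w hsol hpos hZ hper hnc hw0 (by rw [huq]; exact hq1)
  have hμ1 := hμ.trans_le (min_le_left _ _)
  have hμ2 := hμ.trans_le (min_le_right _ _)
  refine ⟨hμ1, ?_⟩
  set N : ℝ → ℝ := fun t => g1TV κ τ (u t) * fTV V K c (u t) + ω ^ 2 * (u t - u0) +
    g2TV κ τ (u t) * hTV V' K μ (u t) * w t with hN
  have hwN : ∀ t, HasDerivAt w (-ω ^ 2 * (u t - u0) + N t) t := fun t =>
    (hsol.2 t).congr_deriv (by simp only [hN]; ring)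
  have hNb : ∀ t, |u t - u0| ≤ r1 / 2 → |N t| ≤ η * (|ω * (u t - u0)| + |w t|) := by
    intro t ht
    obtain ⟨e1, e2, e3⟩ := hloc (y := u t) (show |u t - u0| < r1 by linarith)
    rw [hf0] at e1
    simp only [Real.norm_eq_abs, mul_zero, sub_zero, smul_eq_mul] at e1
    have e1' : |g1TV κ τ (u t) * fTV V K c (u t) + ω ^ 2 * (u t - u0)|
        ≤ η * |ω * (u t - u0)| := by
      rw [abs_mul ω, abs_of_pos hω, ← mul_assoc]
      refine le_trans (le_of_eq ?_) e1
      congr 1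
      ring
    have e4 : |hTV V' K μ (u t)| ≤ η / C := by
      have e3' : |fdTV V' K (u t) - fdTV V' K u0| < η / (2 * C) := e3
      have : hTV V' K μ (u t) = (fdTV V' K (u t) - fdTV V' K u0) + (μ + fdTV V' K u0) := by
        unfold hTV; ring
      rw [this]
      refine (abs_add_le _ _).trans ?_
      have : η / C = η / (2 * C) + η / (2 * C) := by field_simp; norm_num
      linarith
    have e5 : |g2TV κ τ (u t) * hTV V' K μ (u t)| ≤ η := by
      rw [abs_mul, abs_of_pos (g2_pos hA2 hτ (hpos t))]
      calc _ ≤ C * (η / C) := mul_le_mul e2.le e4 (abs_nonneg _) hCpos.le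
        _ = η := by field_simp
    calc |N t| ≤ _ := abs_add_le _ _
      _ ≤ η * |ω * (u t - u0)| + η * |w t| := by
        rw [abs_mul _ (w t)]
        exact add_le_add e1' (mul_le_mul_of_nonneg_right e5 (abs_nonneg _))
      _ = _ := by ring
  have hqne : q - u0 ≠ 0 := sub_ne_zero.2 (hAdmne q hqA)
  have hA0 : 0 < |ω * (u 0 - u0)| := by
    rw [huq]; exact abs_pos.2 (mul_ne_zero hω.ne' hqne)
  have hAeq : |ω * (u 0 - u0)| = ω * |q - u0| := by rw [huq, abs_mul, abs_of_pos hω]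
  have hAr : 2 * |ω * (u 0 - u0)| ≤ ω * (r1 / 2) := by
    rw [hAeq]
    have := mul_le_mul_of_nonneg_left hq2.le hω.le
    linarith
  have hrot := rot u w N u0 ω η (r1 / 2) T σ _ hω hη.le hsol.1 hwN hNb hw0 rfl hA0 hAr hη1 hσ1
  obtain ⟨⟨T1, hT1, hwT1, hside⟩, hlow⟩ :=
    rot_concl u w N u0 ω η (r1 / 2) T σ _ ε' hω hη.le hsol.1 hwN hNb hw0 rfl hA0 hAr hη1 hσ1
      hε' hε'3 hσ2 hσ3 (by linarith) hη2
  have huT1 : u T1 = u 0 :=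
    orbit hA1 hA2 hτ K c μ Z u w hsol hpos hZ hper hnc u0 uM um hf0 huM h1 h2 hS1 hS2 hS3 T1 0
      hwT1 hw0 hside
  have hT1' := abs_le.1 hT1
  have hT1pos : 0 < T1 := by
    have : ε' < 2 * Real.pi / ω := by
      rw [lt_div_iff₀ hω]; linarith
    linarith
  have hZT1 : Z ≤ T1 := by
    apply hZleast T1 hT1pos
    intro z
    have := autonomy' hA1 hA2 hτ K c μ Z u w hsol hpos hZ hper T1 0 huT1 (by rw [hwT1, hw0]) z
    rwa [zero_add, add_comm] at this
  have hper0 := hper 0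
  rw [zero_add, hw0] at hper0
  have hZlow := hlow Z hZ (by linarith) hper0.1 hper0.2
  refine ⟨by rw [abs_lt]; constructor <;> linarith, ?_⟩
  intro z
  have hp : Function.Periodic (fun x => (u x, w x)) Z := fun x => by
    simp only [(hper x).1, (hper x).2]
  obtain ⟨y, hy, hyz⟩ := hp.exists_mem_Ico₀ hZ z
  simp only [Prod.mk.injEq] at hyz
  rw [hyz.1, hyz.2]
  obtain ⟨b1, b2, _⟩ := hrot y ⟨hy.1, by linarith [hy.2]⟩
  rw [hAeq] at b1 b2
  rw [abs_mul, abs_of_pos hω] at b1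
  have b1' : |u y - u0| ≤ 2 * |q - u0| := by
    have : ω * |u y - u0| ≤ ω * (2 * |q - u0|) := by linarith
    exact le_of_mul_le_mul_left this hω
  rw [lt_div_iff₀ (by positivity)] at hq3
  have hsum : |u y - u0| + |w y| < ε := by linarith
  refine lt_of_le_of_lt ?_ hsum
  rw [Real.sqrt_le_left (by positivity), ← sq_abs (u y - u0), ← sq_abs (w y)]
  nlinarith [abs_nonneg (u y - u0), abs_nonneg (w y)]


end TrafficTW
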